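/- arXiv:2104.07729 — 2 statements merged into one kernel-verified Lean document; each statement's English description precedes it below -/
import Mathlib

section
/- Let k ≥ 2 be an integer and let p be a fixed positive integer. For all sufficiently large n (depending on k and p), if G is an n-vertex W_{2k+1}-free simple graph attaining the maximum spectral radius among all n-vertex W_{2k+1}-free graphs, then the set P = { v ∈ V(G) : d(v) ≤ (1/2 − 1/p)n } satisfies |P| ≤ 16 p k n^{1/k}. -/
/-- The wheel graph on `t` vertices: vertex `0` joined to every vertex of the
cycle `1, 2, …, t-1` (with `t-1` adjacent to `1`). -/
def wheelGraph (t : ℕ) : SimpleGraph (Fin t) where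
  Adj a b := a ≠ b ∧ (a.val = 0 ∨ b.val = 0 ∨ a.val + 1 = b.val ∨ b.val + 1 = a.val ∨
      (a.val = 1 ∧ b.val = t - 1) ∨ (b.val = 1 ∧ a.val = t - 1))
  symm := by
    constructor
    intro a b h
    exact ⟨h.1.symm, by tauto⟩
  loopless := by
    constructor
    intro a h
    exact h.1 rfl

/-- `G` contains a copy of `F`, i.e. a subgraph isomorphic to `F`. -/
def ContainsCopy {α β : Type*} (F : SimpleGraph α) (G : SimpleGraph β) : Prop :=
  ∃ f : α ↪ β, ∀ a b, F.Adj a b → G.Adj (f a) (f b)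

/-- `G` is `W_t`-free: it contains no subgraph isomorphic to the wheel on `t` vertices. -/
def WheelFree (t : ℕ) {n : ℕ} (G : SimpleGraph (Fin n)) : Prop :=
  ¬ ContainsCopy (wheelGraph t) G

/-- The spectral radius of `G`: the largest eigenvalue of its adjacency matrix. -/
noncomputable def lam1 {n : ℕ} (G : SimpleGraph (Fin n)) : ℝ := by
  classical
  exact sSup {μ : ℝ | Module.End.HasEigenvalue (Matrix.toLin' (G.adjMatrix ℝ)) μ}

/-- The number of edges of a graph on a finite vertex type. -/
noncomputable def edgeCount {V : Type*} [Fintype V] (G : SimpleGraph V) : ℕ := by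
  classical
  exact G.edgeFinset.card

/-- The degree of a vertex. -/
noncomputable def deg {n : ℕ} (G : SimpleGraph (Fin n)) (v : Fin n) : ℕ := by
  classical
  exact G.degree v

/-- The number of neighbours of `v` inside the set `A`. -/
noncomputable def degIn {n : ℕ} (G : SimpleGraph (Fin n)) (A : Finset (Fin n)) (v : Fin n) : ℕ := by
  classical
  exact (A.filter fun u => G.Adj v u).card

/-- The number of edges of `G` with one endpoint in `S` and the other outside `S`. -/
noncomputable def cutCount {n : ℕ} (G : SimpleGraph (Fin n)) (S : Finset (Fin n)) : ℕ := by
  classical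
  exact ((Finset.univ : Finset (Fin n × Fin n)).filter
    fun p => G.Adj p.1 p.2 ∧ p.1 ∈ S ∧ p.2 ∉ S).card

/-- `(S, T)` is a maximum cut of `G`. -/
def IsMaxCut {n : ℕ} (G : SimpleGraph (Fin n)) (S T : Finset (Fin n)) : Prop :=
  T = Sᶜ ∧ ∀ S' : Finset (Fin n), cutCount G S' ≤ cutCount G S

/-- `G` attains the maximum spectral radius among all `n`-vertex `W_t`-free graphs. -/
def IsSpexWheel (t : ℕ) {n : ℕ} (G : SimpleGraph (Fin n)) : Prop :=
  WheelFree t G ∧ ∀ H : SimpleGraph (Fin n), WheelFree t H → lam1 H ≤ lam1 G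

/-- `G` attains the maximum number of edges among all `n`-vertex `W_t`-free graphs. -/
def IsExWheel (t : ℕ) {n : ℕ} (G : SimpleGraph (Fin n)) : Prop :=
  WheelFree t G ∧ ∀ H : SimpleGraph (Fin n), WheelFree t H → edgeCount H ≤ edgeCount G

section aux
set_option linter.unusedSectionVars false
open Finset

variable {V : Type*} [DecidableEq V]

/-- number of neighbours of `v` in `S` -/
noncomputable def dg (G : SimpleGraph V) (S : Finset V) (v : V) : ℕ := by
  classical exact (S.filter (fun u => G.Adj v u)).card

/-- twice the number of edges inside `S` -/
noncomputable def e2 (G : SimpleGraph V) (S : Finset V) : ℕ := ∑ v ∈ S, dg G S v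

lemma dg_eq_sum (G : SimpleGraph V) (S : Finset V) (v : V) [DecidableRel G.Adj] :
    dg G S v = ∑ u ∈ S, if G.Adj v u then 1 else 0 := by
  classical
  unfold dg
  rw [Finset.card_filter]
  exact Finset.sum_congr rfl fun u _ => by congr

lemma sum_dg_comm (G : SimpleGraph V) (S T : Finset V) :
    ∑ v ∈ S, dg G T v = ∑ u ∈ T, dg G S u := by
  classical
  simp only [dg_eq_sum]
  rw [Finset.sum_comm]
  simp only [G.adj_comm]

lemma dg_union (G : SimpleGraph V) (S T : Finset V) (h : Disjoint S T) (v : V) :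
    dg G (S ∪ T) v = dg G S v + dg G T v := by
  classical
  simp only [dg_eq_sum]
  rw [Finset.sum_union h]

lemma dg_mono (G : SimpleGraph V) {S T : Finset V} (h : S ⊆ T) (v : V) :
    dg G S v ≤ dg G T v := by
  classical
  simp only [dg_eq_sum]
  exact Finset.sum_le_sum_of_subset h

lemma dg_le_card (G : SimpleGraph V) (S : Finset V) (v : V) : dg G S v ≤ S.card := by
  classical
  exact Finset.card_filter_le _ _

lemma exists_of_dg (G : SimpleGraph V) (S F : Finset V) (v : V) (h : F.card < dg G S v) :
    ∃ u ∈ S, G.Adj v u ∧ u ∉ F := by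
  classical
  unfold dg at h
  obtain ⟨u, hu, hF⟩ := Finset.exists_mem_notMem_of_card_lt_card h
  simp only [Finset.mem_filter] at hu
  exact ⟨u, hu.1, hu.2, hF⟩

lemma e2_union (G : SimpleGraph V) (S T : Finset V) (h : Disjoint S T) :
    e2 G (S ∪ T) = e2 G S + e2 G T + 2 * ∑ v ∈ S, dg G T v := by
  unfold e2
  rw [Finset.sum_union h]
  simp only [dg_union G S T h, Finset.sum_add_distrib]
  rw [sum_dg_comm G T S]
  ring

lemma e2_singleton (G : SimpleGraph V) (v : V) : e2 G {v} = 0 := by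
  classical
  simp [e2, dg_eq_sum]

lemma e2_sdiff (G : SimpleGraph V) {S U : Finset V} (h : S ⊆ U) :
    e2 G U = e2 G S + e2 G (U \ S) + 2 * ∑ v ∈ S, dg G (U \ S) v := by
  conv_lhs => rw [← Finset.union_sdiff_of_subset h]
  exact e2_union G _ _ Finset.disjoint_sdiff

lemma cover1 (G : SimpleGraph V) {S U : Finset V} (h : S ⊆ U) :
    2 * ∑ v ∈ S, dg G U v ≤ e2 G U + e2 G S := by
  rw [e2_sdiff G h]
  have : ∑ v ∈ S, dg G U v = e2 G S + ∑ v ∈ S, dg G (U \ S) v := by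
    unfold e2
    rw [← Finset.sum_add_distrib]
    refine Finset.sum_congr rfl fun v _ => ?_
    rw [← dg_union G _ _ Finset.disjoint_sdiff, Finset.union_sdiff_of_subset h]
  omega

lemma cover2 (G : SimpleGraph V) {S U : Finset V} (h : S ⊆ U) :
    e2 G U ≤ e2 G S + 2 * ∑ v ∈ U \ S, dg G U v := by
  rw [e2_sdiff G h]
  have : ∑ v ∈ U \ S, dg G U v = e2 G (U \ S) + ∑ v ∈ S, dg G (U \ S) v := by
    rw [sum_dg_comm G S]
    unfold e2
    rw [← Finset.sum_add_distrib]
    refine Finset.sum_congr rfl fun v _ => ?_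
    rw [← dg_union G _ _ Finset.sdiff_disjoint, Finset.sdiff_union_of_subset h]
  omega

/-- dense core -/
lemma exists_core (G : SimpleGraph V) (a : ℕ) (S : Finset V) (h : 2 * a * S.card < e2 G S) :
    ∃ T ⊆ S, T.Nonempty ∧ (∀ v ∈ T, a < dg G T v) ∧
      ∀ A ⊆ T, A.Nonempty → (T \ A).Nonempty → ∃ u ∈ A, ∃ w ∈ T \ A, G.Adj u w := by
  classical
  obtain ⟨T, hTS, hT⟩ := exists_minimal_le_of_wellFoundedLT
    (fun T : Finset V => 2 * a * T.card < e2 G T) S h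
  have hmin : ∀ T' ⊂ T, e2 G T' ≤ 2 * a * T'.card := by
    intro T' hT'
    by_contra hc
    push Not at hc
    exact hT'.2 (hT.2 hc hT'.1)
  have hT1 : 2 * a * T.card < e2 G T := hT.1
  refine ⟨T, hTS, ?_, ?_, ?_⟩
  · rw [Finset.nonempty_iff_ne_empty]
    rintro rfl
    simp [e2] at hT1
  · intro v hv
    have h1 := e2_sdiff G (Finset.singleton_subset_iff.2 hv)
    have h2 := hmin (T \ {v}) (by
      rw [Finset.sdiff_singleton_eq_erase]; exact Finset.erase_ssubset hv)
    rw [e2_singleton] at h1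
    simp only [Finset.sum_singleton] at h1
    have h3 : (T \ {v}).card + 1 = T.card := by
      rw [Finset.sdiff_singleton_eq_erase]; exact Finset.card_erase_add_one hv
    have h4 := dg_mono G (Finset.sdiff_subset : T \ {v} ⊆ T) v
    rw [← h3] at hT1
    nlinarith
  · intro A hA hA1 hA2
    by_contra hc
    push Not at hc
    have h1 := e2_sdiff G hA
    have h2 : ∑ v ∈ A, dg G (T \ A) v = 0 := by
      refine Finset.sum_eq_zero fun v hv => ?_
      rw [dg_eq_sum]
      refine Finset.sum_eq_zero fun u hu => ?_
      rw [if_neg (hc v hv u hu)]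
    have h3 := hmin A (Finset.ssubset_iff_subset_ne.2 ⟨hA, by rintro rfl; simp at hA2⟩)
    have h4 := hmin (T \ A) (Finset.sdiff_ssubset hA hA1)
    have h5 := Finset.card_sdiff_add_card_eq_card hA
    rw [← h5] at hT1
    nlinarith

/-- a cut in which each vertex has half of its neighbours across -/
lemma exists_cut (G : SimpleGraph V) (T : Finset V) :
    ∃ X ⊆ T, (∀ v ∈ X, dg G T v ≤ 2 * dg G (T \ X) v) ∧
      ∀ v ∈ T \ X, dg G T v ≤ 2 * dg G X v := by
  classical
  obtain ⟨X, hX, hmin⟩ := Finset.exists_min_image T.powerset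
    (fun X => e2 G X + e2 G (T \ X)) ⟨∅, by simp⟩
  rw [Finset.mem_powerset] at hX
  simp only [Finset.mem_powerset] at hmin
  have key : ∀ v, ∀ A B : Finset V, v ∉ A → v ∉ B → Disjoint A B → insert v A ∪ B = T →
      e2 G (insert v A) + e2 G B ≤ e2 G A + e2 G (insert v B) →
      dg G T v ≤ 2 * dg G B v := by
    intro v A B hA hB hAB hT h
    have i1 := e2_union G {v} A (by simpa using hA)
    have i2 := e2_union G {v} B (by simpa using hB)
    rw [e2_singleton, ← Finset.insert_eq, Finset.sum_singleton] at i1 i2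
    have i3 : dg G T v = dg G A v + dg G B v := by
      rw [← hT, Finset.insert_union, Finset.insert_eq, dg_union, dg_union _ _ _ hAB]
      · have : dg G {v} v = 0 := by simp [dg_eq_sum]
        omega
      · simp [hA, hB]
    omega
  refine ⟨X, hX, fun v hv => ?_, fun v hv => ?_⟩
  · have hvT := hX hv
    refine key v (X.erase v) (T \ X) (by simp) (by simp [hv]) ?_ ?_ ?_
    · exact Finset.disjoint_sdiff.mono_left (Finset.erase_subset _ _)
    · rw [Finset.insert_erase hv, Finset.union_sdiff_of_subset hX]
    · have := hmin (X.erase v) ((Finset.erase_subset _ _).trans hX)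
      rw [Finset.insert_erase hv]
      have e : T \ X.erase v = insert v (T \ X) := by
        ext u; simp only [Finset.mem_sdiff, Finset.mem_erase, Finset.mem_insert]
        by_cases h : u = v
        · subst h; simp [hvT]
        · simp [h]
      rwa [e] at this
  · have hv' := Finset.mem_sdiff.1 hv
    refine key v ((T \ X).erase v) X (by simp) hv'.2 ?_ ?_ ?_
    · exact Finset.sdiff_disjoint.mono_left (Finset.erase_subset _ _)
    · rw [Finset.insert_erase hv, Finset.sdiff_union_of_subset hX]
    · have := hmin (insert v X) (Finset.insert_subset hv'.1 hX)
      rw [Finset.insert_erase hv]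
      have e : T \ insert v X = (T \ X).erase v := by
        ext u; simp only [Finset.mem_sdiff, Finset.mem_erase, Finset.mem_insert]; tauto
      rw [e] at this
      omega

lemma greedy_path (G : SimpleGraph V) (T Y : Finset V) (d : ℕ) (hd : ∀ v ∈ T, d ≤ dg G T v)
    (hY : ∀ u ∈ T, ∀ v ∈ T, G.Adj u v → (u ∈ Y ↔ v ∉ Y)) (s : ℕ) :
    ∀ (b : V) (F : Finset V), b ∈ T → b ∈ Y → b ∉ F → F.card + 2 * s ≤ d →
      ∃ y ∈ T, y ∈ Y ∧ ∃ p : G.Walk b y, p.IsPath ∧ p.length = 2 * s ∧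
        ∀ v ∈ p.support, v ∈ T ∧ v ∉ F := by
  induction s with
  | zero =>
    intro b F hbT hbY hbF _
    exact ⟨b, hbT, hbY, SimpleGraph.Walk.nil, by simp, by simp, by simp [hbT, hbF]⟩
  | succ s ih =>
    intro b F hbT hbY hbF hF
    obtain ⟨z, hzT, hbz, hzF⟩ := exists_of_dg G T F b (by have := hd b hbT; omega)
    have hc1 := Finset.card_insert_le b F
    have hc2 := Finset.card_insert_le z (insert b F)
    obtain ⟨w, hwT, hzw, hwF⟩ := exists_of_dg G T (insert b F) z (by have := hd z hzT; omega)
    have hzY : z ∉ Y := (hY b hbT z hzT hbz).1 hbY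
    have hwY : w ∈ Y := by
      by_contra h
      exact hzY ((hY z hzT w hwT hzw).2 h)
    have hwz : w ≠ z := hzw.ne'
    obtain ⟨y, hyT, hyY, p, hp, hl, hs⟩ := ih w (insert z (insert b F)) hwT hwY
      (by simp only [Finset.mem_insert, not_or] at hwF ⊢; exact ⟨hwz, hwF⟩) (by omega)
    refine ⟨y, hyT, hyY, SimpleGraph.Walk.cons hbz (SimpleGraph.Walk.cons hzw p), ?_, ?_, ?_⟩
    · rw [SimpleGraph.Walk.cons_isPath_iff, SimpleGraph.Walk.cons_isPath_iff]
      refine ⟨⟨hp, fun h => ?_⟩, fun h => ?_⟩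
      · have := (hs z h).2; simp at this
      · rw [SimpleGraph.Walk.support_cons, List.mem_cons] at h
        rcases h with h | h
        · exact hbz.ne h
        · have := (hs b h).2; simp at this
    · simp [hl]; ring
    · intro v hv
      simp only [SimpleGraph.Walk.support_cons, List.mem_cons] at hv
      rcases hv with rfl | rfl | hv
      · exact ⟨hbT, hbF⟩
      · exact ⟨hzT, hzF⟩
      · have := hs v hv
        simp only [Finset.mem_insert, not_or] at this
        exact ⟨this.1, this.2.2.2⟩

/-- paths of prescribed even length between two colour classes -/
lemma ab_path (G : SimpleGraph V) (T Y A : Finset V) (d s : ℕ) (hd : ∀ v ∈ T, d ≤ dg G T v)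
    (hs : 1 ≤ s) (hsd : 2 * s + 1 ≤ d)
    (hconn : ∀ A ⊆ T, A.Nonempty → (T \ A).Nonempty → ∃ u ∈ A, ∃ w ∈ T \ A, G.Adj u w)
    (hY : ∀ u ∈ T, ∀ v ∈ T, G.Adj u v → (u ∈ Y ↔ v ∉ Y)) (hYT : Y ⊆ T) (hA : A ⊆ Y)
    (hA1 : A.Nonempty) (hA2 : ∃ b ∈ Y, b ∉ A) :
    ∃ a ∈ A, ∃ b ∈ Y, b ∉ A ∧ ∃ p : G.Walk a b, p.IsPath ∧ p.length = 2 * s ∧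
        ∀ v ∈ p.support, v ∈ T := by
  classical
  -- a vertex with neighbours of both colours
  obtain ⟨z, hzT, a, haA, b, hbY, hbA, hza, hzb⟩ : ∃ z ∈ T, ∃ a ∈ A, ∃ b ∈ Y, b ∉ A ∧
      G.Adj z a ∧ G.Adj z b := by
    obtain ⟨b0, hb0, hb0A⟩ := hA2
    obtain ⟨a0, ha0⟩ := hA1
    obtain ⟨u, hu, w, hw, huw⟩ := hconn (T.filter (fun v => v ∈ A ∨ (v ∉ Y ∧ ∃ a ∈ A, G.Adj v a)))
      (Finset.filter_subset _ _) ⟨a0, by simp [hYT (hA ha0), ha0]⟩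
      ⟨b0, by simp [hYT hb0, hb0, hb0A]⟩
    simp only [Finset.mem_filter, Finset.mem_sdiff, not_and, not_or] at hu hw
    obtain ⟨huT, hu⟩ := hu
    obtain ⟨hwT, hw⟩ := hw
    have hw := hw hwT
    rcases hu with hu | ⟨huY, a, ha, hua⟩
    · exact absurd ⟨u, hu, huw.symm⟩ (hw.2 ((hY u huT w hwT huw).1 (hA hu)))
    · refine ⟨u, huT, a, ha, w, ?_, hw.1, hua, huw⟩
      by_contra h
      exact huY ((hY u huT w hwT huw).2 h)
  have hzY : z ∉ Y := by
    intro h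
    exact (hY z hzT b (hYT hbY) hzb).1 h hbY
  -- a third neighbour
  obtain ⟨c, hcT, hzc, hcF⟩ := exists_of_dg G T {a, b} z (by
    have := hd z hzT
    have := Finset.card_le_two (a := a) (b := b)
    omega)
  simp only [Finset.mem_insert, Finset.mem_singleton, not_or] at hcF
  have hcY : c ∈ Y := by
    by_contra h
    exact hzY ((hY z hzT c hcT hzc).2 h)
  -- the doubled colour: two start vertices `x1 ∈ A`, `x2 ∉ A`, continuing through `m`
  obtain ⟨x1, x2, m, hx1A, hx2Y, hx2A, hmY, h1m, h2m, hz1, hz2, hzm⟩ :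
      ∃ x1 x2 m, x1 ∈ A ∧ x2 ∈ Y ∧ x2 ∉ A ∧ m ∈ Y ∧ x1 ≠ m ∧ x2 ≠ m ∧
        G.Adj z x1 ∧ G.Adj z x2 ∧ G.Adj z m :=
    ⟨a, b, c, haA, hbY, hbA, hcY, fun h => hcF.1 h.symm, fun h => hcF.2 h.symm, hza, hzb, hzc⟩
  obtain ⟨y, hyT, hyY, p, hp, hl, hsup⟩ := greedy_path G T Y d hd hY (s - 1) m {z, x1, x2}
    (hYT hmY) hmY (by simp [hzm.ne', h1m.symm, h2m.symm]) (by
      have := Finset.card_le_three (a := z) (b := x1) (c := x2)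
      omega)
  have build : ∀ x, G.Adj z x → x ∈ Y → (x ∉ p.support) →
      ∃ q : G.Walk x y, q.IsPath ∧ q.length = 2 * s ∧ ∀ v ∈ q.support, v ∈ T := by
    intro x hzx hxY hxp
    refine ⟨SimpleGraph.Walk.cons hzx.symm (SimpleGraph.Walk.cons hzm p), ?_, ?_, ?_⟩
    · rw [SimpleGraph.Walk.cons_isPath_iff, SimpleGraph.Walk.cons_isPath_iff]
      refine ⟨⟨hp, fun h => ?_⟩, fun h => ?_⟩
      · have := (hsup z h).2; simp at this
      · rw [SimpleGraph.Walk.support_cons, List.mem_cons] at h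
        rcases h with h | h
        · exact hzx.ne h.symm
        · exact hxp h
    · simp [hl]; omega
    · intro v hv
      simp only [SimpleGraph.Walk.support_cons, List.mem_cons] at hv
      rcases hv with rfl | rfl | hv
      · exact hYT hxY
      · exact hzT
      · exact (hsup v hv).1
  by_cases hyA : y ∈ A
  · obtain ⟨q, hq, hql, hqs⟩ := build x2 hz2 hx2Y (fun h => by simpa using (hsup x2 h).2)
    exact ⟨y, hyA, x2, hx2Y, hx2A, q.reverse, hq.reverse, by simp [hql], by simpa using hqs⟩
  · obtain ⟨q, hq, hql, hqs⟩ := build x1 hz1 (hA hx1A) (fun h => by simpa using (hsup x1 h).2)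
    exact ⟨x1, hx1A, y, hyY, hyA, q, hq, hql, hqs⟩

lemma isPath_append {G : SimpleGraph V} {u v w : V} (p : G.Walk u v) (q : G.Walk v w)
    (hp : p.IsPath) (hq : q.IsPath) (h : ∀ x ∈ p.support, x ∈ q.support → x = v) :
    (p.append q).IsPath := by
  rw [SimpleGraph.Walk.isPath_def, SimpleGraph.Walk.support_append]
  have hq' := (SimpleGraph.Walk.isPath_def q).1 hq
  rw [← SimpleGraph.Walk.cons_tail_support, List.nodup_cons] at hq'
  rw [List.nodup_append']
  refine ⟨hp.support_nodup, hq'.2, ?_⟩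
  intro x hx hx2
  have := h x hx (List.mem_of_mem_tail hx2)
  subst this
  exact hq'.1 hx2

lemma tree_walk (G : SimpleGraph V) (lev : V → ℕ∞) (par : V → V)
    (hpar : ∀ (i : ℕ) v, lev v = ((i + 1 : ℕ) : ℕ∞) → lev (par v) = (i : ℕ∞) ∧ G.Adj v (par v))
    (s : ℕ) : ∀ (i : ℕ) (x : V), lev x = ((i + s : ℕ) : ℕ∞) →
      lev (par^[s] x) = (i : ℕ∞) ∧
      ∃ w : G.Walk x (par^[s] x), w.IsPath ∧ w.length = s ∧
        ∀ v ∈ w.support, ∃ r ≤ s, v = par^[r] x ∧ lev v = ((i + s - r : ℕ) : ℕ∞) := by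
  induction s with
  | zero =>
    intro i x hx
    refine ⟨by simpa using hx, SimpleGraph.Walk.nil, by simp, by simp, ?_⟩
    intro v hv
    simp at hv
    subst hv
    exact ⟨0, le_rfl, by simp, by simpa using hx⟩
  | succ s ih =>
    intro i x hx
    obtain ⟨h1, h2⟩ := hpar (i + s) x (by rw [hx]; congr 1)
    obtain ⟨h3, w, hw, hl, hsup⟩ := ih i (par x) h1
    rw [Function.iterate_succ_apply]
    refine ⟨h3, SimpleGraph.Walk.cons h2 w, ?_, by simp [hl], ?_⟩
    · rw [SimpleGraph.Walk.cons_isPath_iff]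
      refine ⟨hw, fun h => ?_⟩
      obtain ⟨r, hr, _, hlev⟩ := hsup x h
      rw [hx, Nat.cast_inj] at hlev
      omega
    · intro v hv
      rw [SimpleGraph.Walk.support_cons, List.mem_cons] at hv
      rcases hv with rfl | hv
      · exact ⟨0, by omega, rfl, by simpa using hx⟩
      · obtain ⟨r, hr, hv, hlev⟩ := hsup v hv
        refine ⟨r + 1, by omega, by rw [Function.iterate_succ_apply]; exact hv, ?_⟩
        rw [hlev]; congr 1; omega

/-- `G` contains a cycle of length `2 * k`, given by its vertex sequence -/
def HasCyc (G : SimpleGraph V) (k : ℕ) : Prop :=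
  ∃ f : ℕ → V, (∀ i j, i < 2 * k → j < 2 * k → f i = f j → i = j) ∧
    (∀ i, i + 1 < 2 * k → G.Adj (f i) (f (i + 1))) ∧ G.Adj (f (2 * k - 1)) (f 0)

lemma hasCyc_of_path (G : SimpleGraph V) (k : ℕ) (hk : 1 ≤ k) {u v : V} (p : G.Walk u v)
    (hp : p.IsPath) (hl : p.length = 2 * k - 1) (h : G.Adj v u) : HasCyc G k := by
  refine ⟨p.getVert, fun i j hi hj hij => ?_, fun i hi => ?_, ?_⟩
  · exact hp.getVert_injOn (by simp only [Set.mem_ofPred_eq]; omega)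
      (by simp only [Set.mem_ofPred_eq]; omega) hij
  · exact p.adj_getVert_succ (by omega)
  · rw [← hl]; simpa using h

lemma level_cycle (G : SimpleGraph V) (lev : V → ℕ∞) (par : V → V) (r : V)
    (hr : ∀ v, lev v = 0 → v = r)
    (hpar : ∀ (i : ℕ) v, lev v = ((i + 1 : ℕ) : ℕ∞) → lev (par v) = (i : ℕ∞) ∧ G.Adj v (par v))
    (i k d : ℕ) (hik : i < k) (hd2 : 2 * k ≤ d) (T Y : Finset V)
    (hd : ∀ v ∈ T, d ≤ dg G T v) (hT : T.Nonempty)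
    (hconn : ∀ A ⊆ T, A.Nonempty → (T \ A).Nonempty → ∃ u ∈ A, ∃ w ∈ T \ A, G.Adj u w)
    (hY : ∀ u ∈ T, ∀ v ∈ T, G.Adj u v → (u ∈ Y ↔ v ∉ Y)) (hYT : Y ⊆ T)
    (hYl : ∀ v ∈ Y, lev v = i) (hTl : ∀ v ∈ T, lev v = i ∨ lev v = ((i + 1 : ℕ) : ℕ∞)) :
    HasCyc G k := by
  classical
  have htw := tree_walk G lev par hpar
  -- two vertices in Y
  obtain ⟨y1, hy1, y2, hy2, hy12⟩ : ∃ y1 ∈ Y, ∃ y2 ∈ Y, y1 ≠ y2 := by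
    obtain ⟨z, hzT, hzY⟩ : ∃ z ∈ T, z ∉ Y := by
      obtain ⟨x, hx⟩ := hT
      by_cases hxY : x ∈ Y
      · obtain ⟨z, hz, hxz, _⟩ := exists_of_dg G T ∅ x (by have := hd x hx; simp; omega)
        exact ⟨z, hz, (hY x hx z hz hxz).1 hxY⟩
      · exact ⟨x, hx, hxY⟩
    have hnb : ∀ w ∈ T, G.Adj z w → w ∈ Y := by
      intro w hw hzw
      by_contra h
      exact hzY ((hY z hzT w hw hzw).2 h)
    obtain ⟨u, hu, hzu, _⟩ := exists_of_dg G T ∅ z (by have := hd z hzT; simp; omega)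
    obtain ⟨w, hw, hzw, hwu⟩ := exists_of_dg G T {u} z (by have := hd z hzT; simp; omega)
    exact ⟨u, hnb u hu hzu, w, hnb w hw hzw, fun h => hwu (by simp [h])⟩
  have hex : ∃ t, ∀ y ∈ Y, ∀ y' ∈ Y, par^[t] y = par^[t] y' := by
    refine ⟨i, fun y hy y' hy' => ?_⟩
    have a1 := (htw i 0 y (by rw [hYl y hy]; simp)).1
    have a2 := (htw i 0 y' (by rw [hYl y' hy']; simp)).1
    rw [hr (par^[i] y) (by simpa using a1), hr (par^[i] y') (by simpa using a2)]
  obtain ⟨t, ht, htmin⟩ : ∃ t, (∀ y ∈ Y, ∀ y' ∈ Y, par^[t] y = par^[t] y') ∧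
      ∀ t' < t, ¬ ∀ y ∈ Y, ∀ y' ∈ Y, par^[t'] y = par^[t'] y' :=
    ⟨Nat.find hex, Nat.find_spec hex, fun t' h => Nat.find_min hex h⟩
  have hti : t ≤ i := by
    by_contra hc
    push Not at hc
    apply htmin i hc
    intro y hy y' hy'
    have a1 := (htw i 0 y (by rw [hYl y hy]; simp)).1
    have a2 := (htw i 0 y' (by rw [hYl y' hy']; simp)).1
    rw [hr (par^[i] y) (by simpa using a1), hr (par^[i] y') (by simpa using a2)]
  have ht1 : 1 ≤ t := by
    by_contra hc
    have : t = 0 := by omega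
    subst this
    exact hy12 (by simpa using ht y1 hy1 y2 hy2)
  obtain ⟨t, rfl⟩ : ∃ t', t = t' + 1 := ⟨t - 1, by omega⟩
  have hA2 : ∃ b ∈ Y, b ∉ Y.filter (fun y => par^[t] y = par^[t] y1) := by
    by_contra hc
    push Not at hc
    apply htmin t (by omega)
    intro y hy y' hy'
    rw [(Finset.mem_filter.1 (hc y hy)).2, (Finset.mem_filter.1 (hc y' hy')).2]
  obtain ⟨a, haA, b, hbY, hbA, p, hp, hpl, hps⟩ := ab_path G T Y
    (Y.filter (fun y => par^[t] y = par^[t] y1)) d (k - (t + 1)) hd (by omega) (by omega)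
    hconn hY hYT (Finset.filter_subset _ _) ⟨y1, by simp [hy1]⟩ hA2
  rw [Finset.mem_filter] at haA hbA
  have hne : par^[t] a ≠ par^[t] b := fun h => hbA ⟨hbY, h ▸ haA.2⟩
  obtain ⟨_, wb, hwb, hwbl, hwbs⟩ := htw (t + 1) (i - (t + 1)) b (by
    rw [hYl b hbY]; congr 1; omega)
  obtain ⟨hla, wa, hwa, hwal, hwas⟩ := htw t (i - (t + 1) + 1) a (by
    rw [hYl a haA.1]; congr 1; omega)
  have hadj := (hpar _ _ hla).2
  have hapex : par (par^[t] a) = par^[t + 1] b := by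
    rw [← Function.iterate_succ_apply' par t a]
    exact ht a haA.1 b hbY
  rw [hapex] at hadj
  have key : ∀ r x, (∀ v ∈ T, lev v = i ∨ lev v = ((i + 1 : ℕ) : ℕ∞)) → x ∈ T → r ≤ i →
      lev x = ((i - r : ℕ) : ℕ∞) → r = 0 := by
    intro r x h hx hri hl
    rcases h x hx with h | h <;> rw [h, Nat.cast_inj] at hl <;> omega
  have hpath1 : (p.reverse.append wa).IsPath := by
    refine isPath_append _ _ hp.reverse hwa ?_
    intro x hx hx2
    obtain ⟨r', hr', hx', hl⟩ := hwas x hx2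
    have hxT := hps x (by simpa using hx)
    have : r' = 0 := key r' x hTl hxT (by omega) (by rw [hl]; congr 1; omega)
    subst this
    simpa using hx'
  have hpath2 : (wb.reverse.append (p.reverse.append wa)).IsPath := by
    refine isPath_append _ _ hwb.reverse hpath1 ?_
    intro x hx hx2
    obtain ⟨r1, hr1, hx1, hl1⟩ := hwbs x (by
      rw [SimpleGraph.Walk.support_reverse, List.mem_reverse] at hx; exact hx)
    rw [SimpleGraph.Walk.mem_support_append_iff] at hx2
    rcases hx2 with hx2 | hx2
    · have : r1 = 0 := key r1 x hTl (hps x (by simpa using hx2)) (by omega)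
        (by rw [hl1]; congr 1; omega)
      subst this
      simpa using hx1
    · exfalso
      obtain ⟨r2, hr2, hx3, hl2⟩ := hwas x hx2
      rw [hl1, Nat.cast_inj] at hl2
      have : r1 = r2 := by omega
      subst this
      apply hne
      have e : t = (t - r1) + r1 := by omega
      rw [e, Function.iterate_add_apply, Function.iterate_add_apply, ← hx3, ← hx1]
  refine hasCyc_of_path G k (by omega) _ hpath2 ?_ hadj
  simp only [SimpleGraph.Walk.length_append, SimpleGraph.Walk.length_reverse]
  omega

section levels
variable [Fintype V]

/-- distance levels -/
noncomputable def Lev (G : SimpleGraph V) (r : V) (i : ℕ) : Finset V := by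
  classical exact Finset.univ.filter (fun v => G.edist r v = (i : ℕ∞))

lemma mem_Lev (G : SimpleGraph V) (r : V) (i : ℕ) (v : V) :
    v ∈ Lev G r i ↔ G.edist r v = (i : ℕ∞) := by
  classical
  simp [Lev]

lemma exists_parent (G : SimpleGraph V) (r : V) (i : ℕ) (v : V)
    (h : G.edist r v = ((i + 1 : ℕ) : ℕ∞)) : ∃ u, G.edist r u = (i : ℕ∞) ∧ G.Adj v u := by
  rw [SimpleGraph.edist_comm] at h
  obtain ⟨w, hw⟩ := SimpleGraph.exists_walk_of_edist_eq_coe h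
  cases w with
  | nil => simp at hw
  | @cons _ u _ hvu q =>
    refine ⟨u, ?_, hvu⟩
    simp only [SimpleGraph.Walk.length_cons, Nat.add_right_cancel_iff] at hw
    have h1 : G.edist u r ≤ (i : ℕ∞) := by rw [← hw]; exact SimpleGraph.edist_le q
    have h2 : G.edist v r ≤ G.edist v u + G.edist u r := SimpleGraph.edist_triangle
    rw [SimpleGraph.edist_eq_one_iff_adj.2 hvu, h] at h2
    rw [SimpleGraph.edist_comm]
    refine le_antisymm h1 ?_
    have h3 : G.edist u r ≠ ⊤ := ne_top_of_le_ne_top (ENat.natCast_ne_top i) h1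
    lift G.edist u r to ℕ using h3 with m
    have h2' : i + 1 ≤ 1 + m := by exact_mod_cast h2
    have : i ≤ m := by omega
    exact_mod_cast this

lemma lev_parity (G : SimpleGraph V) (X : Finset V) (hX : ∀ u v, G.Adj u v → (u ∈ X ↔ v ∉ X))
    (r : V) (i : ℕ) : ∀ v, G.edist r v = (i : ℕ∞) → ((v ∈ X ↔ r ∈ X) ↔ Even i) := by
  induction i with
  | zero =>
    intro v hv
    have : r = v := (SimpleGraph.edist_eq_zero_iff (G := G)).1 (by rw [hv]; rfl)
    simp [this]
  | succ i ih =>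
    intro v hv
    obtain ⟨u, hu, hvu⟩ := exists_parent G r i v hv
    have h1 := ih u hu
    have h2 := hX v u hvu
    rw [Nat.even_add_one]
    tauto

lemma adj_lev (G : SimpleGraph V) (X : Finset V) (hX : ∀ u v, G.Adj u v → (u ∈ X ↔ v ∉ X))
    (r : V) (i : ℕ) (u v : V) (hu : G.edist r u = (i : ℕ∞)) (huv : G.Adj u v) :
    G.edist r v = ((i + 1 : ℕ) : ℕ∞) ∨ (1 ≤ i ∧ G.edist r v = ((i - 1 : ℕ) : ℕ∞)) := by
  have h1 : G.edist r v ≤ G.edist r u + G.edist u v := SimpleGraph.edist_triangle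
  have h2 : G.edist r u ≤ G.edist r v + G.edist v u := SimpleGraph.edist_triangle
  rw [SimpleGraph.edist_eq_one_iff_adj.2 huv, hu] at h1
  rw [SimpleGraph.edist_eq_one_iff_adj.2 huv.symm, hu] at h2
  have h3 : G.edist r v ≠ ⊤ := ne_top_of_le_ne_top (by
    exact_mod_cast ENat.natCast_ne_top (i + 1)) h1
  obtain ⟨m, hm⟩ := ENat.ne_top_iff_exists.1 h3
  rw [← hm] at h1 h2 ⊢
  have h1' : m ≤ i + 1 := by exact_mod_cast h1
  have h2' : i ≤ m + 1 := by exact_mod_cast h2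
  have hne : m ≠ i := by
    rintro rfl
    have a1 := lev_parity G X hX r m u hu
    have a2 := lev_parity G X hX r m v hm.symm
    have a3 := hX u v huv
    tauto
  rw [Nat.cast_inj, Nat.cast_inj]
  omega

lemma lev_edges (G : SimpleGraph V) (X : Finset V) (hX : ∀ u v, G.Adj u v → (u ∈ X ↔ v ∉ X))
    (r : V) (k i : ℕ) (hik : i < k) (hG : ¬ HasCyc G k) :
    e2 G (Lev G r i ∪ Lev G r (i + 1)) ≤
      2 * (2 * k) * ((Lev G r i).card + (Lev G r (i + 1)).card) := by
  classical
  by_contra hc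
  push Not at hc
  have hcard := Finset.card_union_le (Lev G r i) (Lev G r (i + 1))
  obtain ⟨T, hTS, hT, hd, hconn⟩ := exists_core G (2 * k) (Lev G r i ∪ Lev G r (i + 1))
    (lt_of_le_of_lt (Nat.mul_le_mul_left _ hcard) hc)
  apply hG
  have hex : ∀ v, ∃ u, ∀ j : ℕ, G.edist r v = ((j + 1 : ℕ) : ℕ∞) →
      G.edist r u = (j : ℕ∞) ∧ G.Adj v u := by
    intro v
    by_cases h : ∃ j : ℕ, G.edist r v = ((j + 1 : ℕ) : ℕ∞)
    · obtain ⟨j, hj⟩ := h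
      obtain ⟨u, hu⟩ := exists_parent G r j v hj
      refine ⟨u, fun j' hj' => ?_⟩
      rw [hj, Nat.cast_inj] at hj'
      have : j = j' := by omega
      subst this
      exact hu
    · exact ⟨v, fun j hj => absurd ⟨j, hj⟩ h⟩
  choose par hpar using hex
  have hTl : ∀ v ∈ T, G.edist r v = i ∨ G.edist r v = ((i + 1 : ℕ) : ℕ∞) := by
    intro v hv
    simpa only [Finset.mem_union, mem_Lev] using hTS hv
  refine level_cycle G (fun v => G.edist r v) par r
    (fun v hv => (SimpleGraph.edist_eq_zero_iff.1 hv).symm) (fun j v h => hpar v j h) i k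
    (2 * k) hik le_rfl T (T.filter (fun v => v ∈ Lev G r i)) (fun v hv => (hd v hv).le) hT hconn
    ?_ (Finset.filter_subset _ _) ?_ hTl
  · intro u hu v hv huv
    simp only [Finset.mem_filter, hu, hv, true_and, mem_Lev]
    have a1 := hX u v huv
    constructor
    · intro b1 b2
      have c1 := lev_parity G X hX r i u b1
      have c2 := lev_parity G X hX r i v b2
      tauto
    · intro b
      have b2 := (hTl v hv).resolve_left b
      by_contra b1
      have b1 := (hTl u hu).resolve_left b1
      have c1 := lev_parity G X hX r _ u b1
      have c2 := lev_parity G X hX r _ v b2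
      tauto
  · intro v hv
    simpa only [mem_Lev] using (Finset.mem_filter.1 hv).2

lemma dg_le_of (G : SimpleGraph V) (S U : Finset V) (v : V) (h : ∀ u ∈ U, G.Adj v u → u ∈ S) :
    dg G U v ≤ dg G S v := by
  classical
  unfold dg
  refine Finset.card_le_card fun u hu => ?_
  simp only [Finset.mem_filter] at hu ⊢
  exact ⟨h u hu.1 hu.2, hu.2⟩

lemma bip_cycle (G : SimpleGraph V) (X : Finset V) (hX : ∀ u v, G.Adj u v → (u ∈ X ↔ v ∉ X))
    (T : Finset V) (r : V) (hrT : r ∈ T) (hT : ∀ u v, G.Adj u v → u ∈ T) (k q : ℕ) (hk : 1 ≤ k)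
    (hq : 1 ≤ q) (hqk : Fintype.card V < q ^ k)
    (hd : ∀ v ∈ T, 2 * k * (q + 3) ≤ dg G Finset.univ v) : HasCyc G k := by
  classical
  by_contra hG
  have hE : ∀ i < k, ∑ v ∈ Lev G r i, dg G (Lev G r (i + 1)) v ≤
      (2 * k) * ((Lev G r i).card + (Lev G r (i + 1)).card) := by
    intro i hi
    have h1 := lev_edges G X hX r k i hi hG
    rw [e2_union] at h1
    · nlinarith
    · rw [Finset.disjoint_left]
      intro v hv hv2
      rw [mem_Lev] at hv hv2
      rw [hv, Nat.cast_inj] at hv2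
      omega
  have hLT : ∀ i, ∀ v ∈ Lev G r i, v ∈ T := by
    intro i v hv
    rw [mem_Lev] at hv
    cases i with
    | zero =>
      have : r = v := (SimpleGraph.edist_eq_zero_iff (G := G)).1 (by rw [hv]; rfl)
      exact this ▸ hrT
    | succ i =>
      obtain ⟨u, _, hu⟩ := exists_parent G r i v hv
      exact hT v u hu
  have grow : ∀ i < k, q * (Lev G r i).card ≤ (Lev G r (i + 1)).card := by
    intro i
    induction i with
    | zero =>
      intro _
      have h0 : Lev G r 0 = {r} := by
        ext v
        rw [mem_Lev, Finset.mem_singleton]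
        have := SimpleGraph.edist_eq_zero_iff (G := G) (u := r) (v := v)
        simp only [Nat.cast_zero]
        rw [this, eq_comm]
      have h1 : dg G Finset.univ r ≤ dg G (Lev G r 1) r := by
        refine dg_le_of _ _ _ _ fun u _ hu => ?_
        rw [mem_Lev]
        simpa using SimpleGraph.edist_eq_one_iff_adj.2 hu
      have h2 := dg_le_card G (Lev G r 1) r
      have h3 := hd r hrT
      rw [h0, Finset.card_singleton]
      simp only [zero_add]
      nlinarith
    | succ i ih =>
      intro hi
      have ih := ih (by omega)
      have e1 := hE i (by omega)
      have e2 := hE (i + 1) hi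
      rw [sum_dg_comm] at e1
      have h1 : (Lev G r (i + 1)).card * (2 * k * (q + 3)) ≤
          ∑ v ∈ Lev G r (i + 1), (dg G (Lev G r i) v + dg G (Lev G r (i + 1 + 1)) v) := by
        rw [← smul_eq_mul]
        refine Finset.card_nsmul_le_sum _ _ _ fun v hv => ?_
        refine (hd v (hLT _ v hv)).trans ?_
        rw [← dg_union]
        · refine dg_le_of _ _ _ _ fun u _ hu => ?_
          rw [mem_Lev] at hv
          rw [Finset.mem_union, mem_Lev, mem_Lev]
          rcases adj_lev G X hX r (i + 1) v u hv hu with h | ⟨_, h⟩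
          · exact Or.inr h
          · exact Or.inl (by simpa using h)
        · rw [Finset.disjoint_left]
          intro v hv hv2
          rw [mem_Lev] at hv hv2
          rw [hv, Nat.cast_inj] at hv2
          omega
      rw [Finset.sum_add_distrib] at h1
      have h2 : (Lev G r i).card ≤ (Lev G r (i + 1)).card := by nlinarith
      have h3 : (2 * k) * ((Lev G r (i + 1)).card * (q + 3)) ≤ (2 * k) *
          ((Lev G r i).card + 2 * (Lev G r (i + 1)).card + (Lev G r (i + 1 + 1)).card) := by
        nlinarith
      have h4 := Nat.le_of_mul_le_mul_left h3 (by omega)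
      nlinarith
  have hpow : ∀ i ≤ k, q ^ i ≤ (Lev G r i).card := by
    intro i
    induction i with
    | zero =>
      intro _
      rw [pow_zero, Nat.one_le_iff_ne_zero, Finset.card_ne_zero]
      exact ⟨r, by rw [mem_Lev]; simp⟩
    | succ i ih =>
      intro hi
      have := grow i (by omega)
      have := ih (by omega)
      rw [pow_succ]
      nlinarith
  have := hpow k le_rfl
  have := Finset.card_le_univ (Lev G r k)
  omega

lemma even_cycle (G : SimpleGraph V) (k q : ℕ) (hk : 1 ≤ k) (hq : 1 ≤ q)
    (hqk : Fintype.card V < q ^ k) (S : Finset V)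
    (h : 2 * (4 * k * (q + 3)) * S.card < e2 G S) :
    ∃ f : ℕ → V, (∀ i j, i < 2 * k → j < 2 * k → f i = f j → i = j) ∧
    (∀ i, i + 1 < 2 * k → G.Adj (f i) (f (i + 1))) ∧ G.Adj (f (2 * k - 1)) (f 0) ∧
    ∀ i < 2 * k, f i ∈ S := by
  classical
  obtain ⟨T, hTS, ⟨r, hr⟩, hd, -⟩ := exists_core G _ S h
  obtain ⟨X, hXT, hX1, hX2⟩ := exists_cut G T
  let H : SimpleGraph V :=
    { Adj := fun u v => G.Adj u v ∧ u ∈ T ∧ v ∈ T ∧ (u ∈ X ↔ v ∉ X)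
      symm := ⟨fun u v h => ⟨h.1.symm, h.2.2.1, h.2.1, by tauto⟩⟩
      loopless := ⟨fun u h => h.1.ne rfl⟩ }
  have hdH : ∀ v ∈ T, 2 * k * (q + 3) ≤ dg H Finset.univ v := by
    intro v hv
    have h0 := hd v hv
    by_cases hvX : v ∈ X
    · have h1 := hX1 v hvX
      have h2 : dg G (T \ X) v ≤ dg H Finset.univ v := by
        unfold dg
        refine Finset.card_le_card fun u hu => ?_
        simp only [Finset.mem_filter, Finset.mem_sdiff, Finset.mem_univ, true_and] at hu ⊢
        exact ⟨hu.2, hv, hu.1.1, by tauto⟩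
      nlinarith
    · have h1 := hX2 v (Finset.mem_sdiff.2 ⟨hv, hvX⟩)
      have h2 : dg G X v ≤ dg H Finset.univ v := by
        unfold dg
        refine Finset.card_le_card fun u hu => ?_
        simp only [Finset.mem_filter, Finset.mem_univ, true_and] at hu ⊢
        exact ⟨hu.2, hv, hXT hu.1, by tauto⟩
      nlinarith
  obtain ⟨f, f1, f2, f3⟩ := bip_cycle H X (fun u v h => h.2.2.2) T r hr (fun u v h => h.2.1) k q
    hk hq hqk hdH
  refine ⟨f, f1, fun i hi => (f2 i hi).1, f3.1, fun i hi => hTS ?_⟩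
  by_cases h : i + 1 < 2 * k
  · exact (f2 i h).2.1
  · have : i = 2 * k - 1 := by omega
    rw [this]
    exact f3.2.1

/-- Mantel-type bound -/
lemma mantel (G : SimpleGraph V) (a : ℕ)
    (hG : ∀ v, ∀ S : Finset V, (∀ u ∈ S, G.Adj v u) → e2 G S ≤ 2 * a * S.card) (U : Finset V) :
    2 * e2 G U ≤ 4 * a * U.card + U.card ^ 2 := by
  classical
  rcases U.eq_empty_or_nonempty with rfl | hU
  · simp [e2]
  obtain ⟨v, hv, hmax⟩ := Finset.exists_max_image U (fun v => dg G U v) hU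
  let N := U.filter (fun u => G.Adj v u)
  have hN : N ⊆ U := Finset.filter_subset _ _
  have hNc : N.card = dg G U v := by
    simp only [dg, N]
  have h1 := cover2 G hN
  have h2 := hG v N (fun u hu => (Finset.mem_filter.1 hu).2)
  have h3 : ∑ w ∈ U \ N, dg G U w ≤ (U \ N).card * N.card := by
    rw [← smul_eq_mul]
    refine Finset.sum_le_card_nsmul _ _ _ fun w hw => ?_
    rw [hNc]
    exact hmax w (Finset.mem_sdiff.1 hw).1
  have h4 := Finset.card_sdiff_add_card_eq_card hN
  rw [← h4]
  have h5 : 4 * ((U \ N).card * N.card) ≤ ((U \ N).card + N.card) ^ 2 := by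
    zify
    nlinarith [sq_nonneg (((U \ N).card : ℤ) - N.card)]
  nlinarith [Nat.zero_le (a * (U \ N).card)]

end levels

end aux

lemma wheel_nbhd {n : ℕ} (G : SimpleGraph (Fin n)) (k q : ℕ) (hk : 2 ≤ k) (hq : 1 ≤ q)
    (hqk : n < q ^ k) (hG : WheelFree (2 * k + 1) G) (v : Fin n) (S : Finset (Fin n))
    (hS : ∀ u ∈ S, G.Adj v u) : e2 G S ≤ 2 * (4 * k * (q + 3)) * S.card := by
  by_contra hc
  push Not at hc
  obtain ⟨f, f1, f2, f3, f4⟩ := even_cycle G k q (by omega) hq (by simpa using hqk) S hc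
  apply hG
  have hvf : ∀ i < 2 * k, G.Adj v (f i) := fun i hi => hS _ (f4 i hi)
  refine ⟨⟨fun i => if i.val = 0 then v else f (i.val - 1), ?_⟩, ?_⟩
  · intro i j hij
    have hi := i.2
    have hj := j.2
    simp only at hij
    split_ifs at hij with h1 h2 h2
    · exact Fin.ext (by omega)
    · exact absurd hij (hvf _ (by omega)).ne
    · exact absurd hij.symm (hvf _ (by omega)).ne
    · have := f1 _ _ (by omega) (by omega) hij
      exact Fin.ext (by omega)
  · intro i j hij
    have hi := i.2
    have hj := j.2
    obtain ⟨hne, h⟩ := hij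
    have hne' : i.val ≠ j.val := fun h => hne (Fin.ext h)
    change G.Adj (if i.val = 0 then v else f (i.val - 1)) (if j.val = 0 then v else f (j.val - 1))
    split_ifs with h1 h2 h2
    · omega
    · exact hvf _ (by omega)
    · exact (hvf _ (by omega)).symm
    · rcases h with h | h | h | h | ⟨ha, hb⟩ | ⟨ha, hb⟩
      · omega
      · omega
      · have := f2 (i.val - 1) (by omega)
        rwa [show i.val - 1 + 1 = j.val - 1 by omega] at this
      · have := f2 (j.val - 1) (by omega)
        rw [show j.val - 1 + 1 = i.val - 1 by omega] at this
        exact this.symm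
      · rw [show i.val - 1 = 0 by omega, show j.val - 1 = 2 * k - 1 by omega]
        exact f3.symm
      · rw [show j.val - 1 = 0 by omega, show i.val - 1 = 2 * k - 1 by omega]
        exact f3

lemma deg_eq_dg {n : ℕ} (G : SimpleGraph (Fin n)) (v : Fin n) :
    deg G v = dg G Finset.univ v := by
  classical
  unfold deg dg
  rw [← SimpleGraph.card_neighborFinset_eq_degree, SimpleGraph.neighborFinset_eq_filter]

lemma eigen_bound {n : ℕ} (G : SimpleGraph (Fin n)) [DecidableRel G.Adj] (B μ : ℝ)
    (hB : ∀ v, (∑ w ∈ G.neighborFinset v, (G.degree w : ℝ)) ≤ B)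
    (hμ : Module.End.HasEigenvalue (Matrix.toLin' (G.adjMatrix ℝ)) μ) : μ ^ 2 ≤ B := by
  obtain ⟨x, hx⟩ := hμ.exists_hasEigenvector
  have hx1 := hx.apply_eq_smul
  have hx0 := hx.2
  rw [Matrix.toLin'_apply] at hx1
  have hx2 : ∀ v, ∑ u ∈ G.neighborFinset v, x u = μ * x v := by
    intro v
    have := congrFun hx1 v
    rwa [SimpleGraph.adjMatrix_mulVec_apply, Pi.smul_apply, smul_eq_mul] at this
  obtain ⟨i0, hi0⟩ : ∃ i, x i ≠ 0 := by
    by_contra hc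
    push Not at hc
    exact hx0 (funext hc)
  obtain ⟨v, -, hv⟩ := Finset.exists_max_image Finset.univ (fun i => |x i|) ⟨i0, Finset.mem_univ _⟩
  have hpos : 0 < |x v| := lt_of_lt_of_le (abs_pos.2 hi0) (hv i0 (Finset.mem_univ _))
  have h1 : μ ^ 2 * x v = ∑ w ∈ G.neighborFinset v, ∑ u ∈ G.neighborFinset w, x u := by
    simp only [hx2]
    rw [← Finset.mul_sum, hx2]
    ring
  have h2 : μ ^ 2 * |x v| ≤ (∑ w ∈ G.neighborFinset v, (G.degree w : ℝ)) * |x v| := by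
    rw [← abs_of_nonneg (sq_nonneg μ), ← abs_mul, h1, Finset.sum_mul]
    refine (Finset.abs_sum_le_sum_abs _ _).trans (Finset.sum_le_sum fun w _ => ?_)
    refine (Finset.abs_sum_le_sum_abs _ _).trans ?_
    have := Finset.sum_le_card_nsmul (G.neighborFinset w) (fun u => |x u|) |x v|
      (fun u _ => hv u (Finset.mem_univ _))
    simpa using this
  exact (le_of_mul_le_mul_right h2 hpos).trans (hB v)

lemma lam1_upper {n : ℕ} (G : SimpleGraph (Fin n)) (B : ℝ)
    (hB : ∀ v, ∀ S : Finset (Fin n), (∀ u, u ∈ S ↔ G.Adj v u) →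
      (∑ w ∈ S, (dg G Finset.univ w : ℝ)) ≤ B) : lam1 G ≤ Real.sqrt B := by
  classical
  unfold lam1
  refine Real.sSup_le (fun μ hμ => Real.le_sqrt_of_sq_le ?_) (Real.sqrt_nonneg _)
  refine eigen_bound G B μ (fun v => ?_) hμ
  have := hB v (G.neighborFinset v) (by simp)
  simp only [← deg_eq_dg] at this
  unfold deg at this
  exact this

/-- complete bipartite graph with first part `{0, …, h-1}` -/
def cbip (n h : ℕ) : SimpleGraph (Fin n) where
  Adj i j := (i.val < h ↔ ¬ j.val < h)
  symm := ⟨fun i j hij => by tauto⟩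
  loopless := ⟨fun i hi => by tauto⟩

lemma cbip_free (n h k : ℕ) (hk : 2 ≤ k) : WheelFree (2 * k + 1) (cbip n h) := by
  rintro ⟨f, hf⟩
  have a1 := hf ⟨0, by omega⟩ ⟨1, by omega⟩ ⟨by simp, by simp⟩
  have a2 := hf ⟨0, by omega⟩ ⟨2, by omega⟩ ⟨by simp, by simp⟩
  have a3 := hf ⟨1, by omega⟩ ⟨2, by omega⟩ ⟨by simp, by simp⟩
  simp only [cbip] at a1 a2 a3
  tauto

lemma lam1_cbip (n h : ℕ) (h1 : 1 ≤ h) (h2 : h < n) :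
    Real.sqrt ((h : ℝ) * ((n - h : ℕ) : ℝ)) ≤ lam1 (cbip n h) := by
  classical
  have hbdd : BddAbove {μ : ℝ | Module.End.HasEigenvalue
      (Matrix.toLin' ((cbip n h).adjMatrix ℝ)) μ} :=
    (Module.End.finite_hasEigenvalue _).bddAbove
  unfold lam1
  refine le_csSup hbdd ?_
  have hc1 : (Finset.univ.filter (fun u : Fin n => u.val < h)).card = h := by
    have := Fin.card_filter_val_lt (n := n) (m := h)
    omega
  have hc2 : (Finset.univ.filter (fun u : Fin n => ¬ u.val < h)).card = n - h := by
    have := Finset.card_filter_add_card_filter_not (s := (Finset.univ : Finset (Fin n)))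
      (fun u : Fin n => u.val < h)
    simp only [Finset.card_univ, Fintype.card_fin] at this
    omega
  set s : ℝ := Real.sqrt (h : ℝ) with hs
  set t : ℝ := Real.sqrt ((n - h : ℕ) : ℝ) with ht
  have hss : s * s = h := Real.mul_self_sqrt (by positivity)
  have htt : t * t = ((n - h : ℕ) : ℝ) := Real.mul_self_sqrt (by positivity)
  rw [Real.sqrt_mul (by positivity)]
  change Module.End.HasEigenvalue _ (s * t)
  refine Module.End.hasEigenvalue_of_hasEigenvector
    (x := fun i : Fin n => if i.val < h then t else s) ⟨?_, ?_⟩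
  · rw [Module.End.mem_eigenspace_iff, Matrix.toLin'_apply]
    funext v
    rw [SimpleGraph.adjMatrix_mulVec_apply, Pi.smul_apply, smul_eq_mul]
    by_cases hv : v.val < h
    · have hN : (cbip n h).neighborFinset v = Finset.univ.filter (fun u : Fin n => ¬ u.val < h) := by
        ext u
        rw [SimpleGraph.mem_neighborFinset, Finset.mem_filter]
        change (v.val < h ↔ ¬ u.val < h) ↔ _
        simp [hv]
      rw [hN, Finset.sum_congr rfl (g := fun _ => s)
        (fun u hu => if_neg (Finset.mem_filter.1 hu).2), Finset.sum_const, hc2, if_pos hv,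
        nsmul_eq_mul, ← htt]
      ring
    · have hN : (cbip n h).neighborFinset v = Finset.univ.filter (fun u : Fin n => u.val < h) := by
        ext u
        rw [SimpleGraph.mem_neighborFinset, Finset.mem_filter]
        change (v.val < h ↔ ¬ u.val < h) ↔ _
        simp [hv]
      rw [hN, Finset.sum_congr rfl (g := fun _ => t)
        (fun u hu => if_pos (Finset.mem_filter.1 hu).2), Finset.sum_const, hc1, if_neg hv,
        nsmul_eq_mul, ← hss]
      ring
  · intro h0
    have := congrFun h0 ⟨0, by omega⟩
    simp only [Pi.zero_apply] at this
    rw [if_pos (by simpa using (by omega : 0 < h))] at this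
    rw [this] at htt
    have : (0 : ℝ) < ((n - h : ℕ) : ℝ) := by
      exact_mod_cast (by omega : 0 < n - h)
    linarith

lemma spex_lower {n : ℕ} (G : SimpleGraph (Fin n)) (k a : ℕ) (hk : 2 ≤ k) (hn : 2 ≤ n)
    (hG : IsSpexWheel (2 * k + 1) G)
    (hnb : ∀ v, ∀ S : Finset (Fin n), (∀ u ∈ S, G.Adj v u) → e2 G S ≤ 2 * a * S.card) :
    (n : ℝ) ^ 2 - 1 ≤ 2 * (e2 G Finset.univ : ℝ) + 4 * a * n := by
  have h1 := hG.2 _ (cbip_free n (n / 2) k hk)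
  have h2 := lam1_cbip n (n / 2) (by omega) (by omega)
  have h3 := lam1_upper G (((e2 G Finset.univ : ℝ) + 2 * a * n) / 2) (by
    intro v S hS
    have c1 := cover1 G (Finset.subset_univ S)
    have c2 := hnb v S (fun u hu => (hS u).1 hu)
    have c3 : S.card ≤ n := by simpa using Finset.card_le_univ S
    have c4 : 2 * ∑ w ∈ S, dg G Finset.univ w ≤ e2 G Finset.univ + 2 * a * n :=
      c1.trans (by nlinarith)
    have c5 : 2 * ∑ w ∈ S, (dg G Finset.univ w : ℝ) ≤ e2 G Finset.univ + 2 * a * n := by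
      exact_mod_cast c4
    linarith)
  have h4 := h2.trans (h1.trans h3)
  rw [Real.sqrt_le_sqrt_iff (by positivity)] at h4
  have h5 : n ^ 2 ≤ 4 * (n / 2 * (n - n / 2)) + 1 := by
    rcases Nat.even_or_odd' n with ⟨m, rfl | rfl⟩
    · rw [show 2 * m / 2 = m by omega, show 2 * m - m = m by omega]
      nlinarith
    · rw [show (2 * m + 1) / 2 = m by omega, show 2 * m + 1 - m = m + 1 by omega]
      nlinarith
  have h6 : (n : ℝ) ^ 2 ≤ 4 * (((n / 2 : ℕ) : ℝ) * ((n - n / 2 : ℕ) : ℝ)) + 1 := by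
    exact_mod_cast h5
  linarith

lemma final_arith (p k n ν L c a : ℝ) (hp : 1 ≤ p) (hk : 2 ≤ k) (hn : 2 ≤ n) (hν16 : 16 ≤ ν)
    (hνs : ν ^ 2 ≤ n) (hcp : c * p = n) (hbig : (17 * p ^ 2 * k) ^ 2 ≤ n)
    (main : 4 * (L * c) ≤ 8 * a * n + L ^ 2 + 1) (hL1 : 16 * p * k * ν < L)
    (hL2 : L ≤ 16 * p * k * ν + 1) (haR : a ≤ 5 * k * ν) : False := by
  have hpk : 1 ≤ p * k := by nlinarith
  have hpkν : 1 ≤ p * k * ν := by nlinarith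
  have hkν : 1 ≤ k * ν := by nlinarith
  have hkνn : 1 ≤ k * ν * n := by nlinarith
  have hp0 : 0 < p := by linarith
  have hL0 : 0 < L := by linarith
  have hLc : L ≤ c := by
    have h1 : 17 * p ^ 2 * k ≤ Real.sqrt n := Real.le_sqrt_of_sq_le hbig
    have h2 : ν ≤ Real.sqrt n := Real.le_sqrt_of_sq_le hνs
    have h3 : Real.sqrt n * Real.sqrt n = n := Real.mul_self_sqrt (by linarith)
    have h4 : L ≤ 17 * p * k * ν := by linarith
    have h5 : L * p ≤ c * p := by
      rw [hcp]
      calc L * p ≤ 17 * p * k * ν * p := mul_le_mul_of_nonneg_right h4 hp0.le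
        _ = (17 * p ^ 2 * k) * ν := by ring
        _ ≤ Real.sqrt n * Real.sqrt n :=
          mul_le_mul h1 h2 (by linarith) (Real.sqrt_nonneg _)
        _ = n := h3
    exact le_of_mul_le_mul_right h5 hp0
  have hLL : L ^ 2 ≤ L * c := by
    rw [sq]; exact mul_le_mul_of_nonneg_left hLc hL0.le
  have hc0 : 0 ≤ c := by linarith
  have hRc : 16 * p * k * ν * c = 16 * (k * ν * n) := by
    rw [← hcp]; ring
  have hLR : 16 * p * k * ν * c ≤ L * c := mul_le_mul_of_nonneg_right hL1.le hc0
  have han : a * n ≤ 5 * (k * ν * n) := by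
    have := mul_le_mul_of_nonneg_right haR (by linarith : (0 : ℝ) ≤ n)
    linarith
  linarith

/-- The set `P` of vertices of degree at most `(1/2 - 1/p)n`
satisfies `|P| ≤ 16 p k n^{1/k}`. -/
theorem few_low_degree_vertices (k p : ℕ) (hk : 2 ≤ k) (hp : 0 < p) :
    ∃ N : ℕ, ∀ n : ℕ, N ≤ n → ∀ G : SimpleGraph (Fin n), IsSpexWheel (2 * k + 1) G →
      (({v : Fin n | (deg G v : ℝ) ≤ (1 / 2 - 1 / (p : ℝ)) * (n : ℝ)}.ncard : ℝ))
        ≤ 16 * (p : ℝ) * (k : ℝ) * (n : ℝ) ^ ((1 : ℝ) / (k : ℝ)) := by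
  classical
  refine ⟨16 ^ k + (17 * p ^ 2 * k) ^ 2, fun n hn G hG => ?_⟩
  have hk0 : (k : ℝ) ≠ 0 := by positivity
  have hkR : (2 : ℝ) ≤ k := by exact_mod_cast hk
  have hpR : (1 : ℝ) ≤ p := by exact_mod_cast hp
  have hn16 : 16 ^ k ≤ n := by omega
  have hn2 : 2 ≤ n := by
    have : 16 ^ 1 ≤ 16 ^ k := Nat.pow_le_pow_right (by norm_num) (by omega)
    omega
  have hnR : (2 : ℝ) ≤ n := by exact_mod_cast hn2
  have hbigR : (17 * (p : ℝ) ^ 2 * k) ^ 2 ≤ n := by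
    have : (17 * p ^ 2 * k) ^ 2 ≤ n := le_trans (Nat.le_add_left _ _) hn
    exact_mod_cast this
  set ν : ℝ := (n : ℝ) ^ ((1 : ℝ) / (k : ℝ)) with hν
  have hν0 : 0 ≤ ν := by positivity
  have hνk : ν ^ k = n := by
    rw [hν, ← Real.rpow_natCast, ← Real.rpow_mul (by positivity), one_div_mul_cancel hk0,
      Real.rpow_one]
  have hν16 : 16 ≤ ν := by
    by_contra hc
    push Not at hc
    have h1 : ν ^ k < 16 ^ k := pow_lt_pow_left₀ hc hν0 (by omega)
    rw [hνk] at h1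
    have h2 : (16 : ℝ) ^ k ≤ n := by exact_mod_cast hn16
    linarith
  have hνs : ν ^ 2 ≤ n := by
    rw [← hνk]
    exact pow_le_pow_right₀ (by linarith) hk
  set q : ℕ := ⌊ν⌋₊ + 1 with hq
  have hqν : (q : ℝ) ≤ ν + 1 := by
    rw [hq]; push_cast
    linarith [Nat.floor_le hν0]
  have hνq : ν < q := by rw [hq]; exact_mod_cast Nat.lt_floor_add_one ν
  have hqk : n < q ^ k := by
    have : (n : ℝ) < (q : ℝ) ^ k := by
      rw [← hνk]; exact pow_lt_pow_left₀ hνq hν0 (by omega)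
    exact_mod_cast this
  set a : ℕ := 4 * k * (q + 3) with ha
  have haR : (a : ℝ) ≤ 5 * k * ν := by
    rw [ha]; push_cast
    have : (q : ℝ) + 3 ≤ 5 / 4 * ν := by linarith
    nlinarith
  have hnb : ∀ v, ∀ S : Finset (Fin n), (∀ u ∈ S, G.Adj v u) → e2 G S ≤ 2 * a * S.card :=
    fun v S hS => wheel_nbhd G k q hk (by omega) hqk hG.1 v S hS
  have hlow := spex_lower G k a hk hn2 hG hnb
  by_contra hc
  push Not at hc
  set R : ℝ := 16 * (p : ℝ) * (k : ℝ) * ν with hR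
  have hR0 : 0 ≤ R := by positivity
  have hncard : {v : Fin n | (deg G v : ℝ) ≤ (1 / 2 - 1 / (p : ℝ)) * (n : ℝ)}.ncard =
      (Finset.univ.filter
        (fun v : Fin n => (deg G v : ℝ) ≤ (1 / 2 - 1 / (p : ℝ)) * (n : ℝ))).card := by
    rw [← Set.ncard_coe_finset]
    simp
  rw [hncard] at hc
  obtain ⟨P, hPsub, hPc⟩ := Finset.exists_subset_card_eq (n := ⌊R⌋₊ + 1)
    (s := Finset.univ.filter
        (fun v : Fin n => (deg G v : ℝ) ≤ (1 / 2 - 1 / (p : ℝ)) * (n : ℝ))) (by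
      exact Nat.succ_le_of_lt ((Nat.floor_lt hR0).2 hc))
  set L : ℝ := (P.card : ℝ) with hL
  have hL1 : R < L := by rw [hL, hPc]; exact_mod_cast Nat.lt_floor_add_one R
  have hL2 : L ≤ R + 1 := by
    rw [hL, hPc]; push_cast
    linarith [Nat.floor_le hR0]
  -- upper bound for the number of edges
  have hup := mantel G a hnb (Finset.univ \ P)
  have hcov := cover2 G (Finset.sdiff_subset : Finset.univ \ P ⊆ Finset.univ)
  rw [Finset.sdiff_sdiff_eq_self (Finset.subset_univ P)] at hcov
  have hsum : (∑ v ∈ P, (dg G Finset.univ v : ℝ)) ≤ L * ((1 / 2 - 1 / (p : ℝ)) * (n : ℝ)) := by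
    rw [hL, ← nsmul_eq_mul]
    refine Finset.sum_le_card_nsmul _ _ _ fun v hv => ?_
    rw [← deg_eq_dg]
    exact (Finset.mem_filter.1 (hPsub hv)).2
  have hcardU : ((Finset.univ \ P).card : ℝ) = n - L := by
    have := Finset.card_sdiff_add_card_eq_card (Finset.subset_univ P)
    simp only [Finset.card_univ, Fintype.card_fin] at this
    have h : ((Finset.univ \ P).card : ℝ) + L = n := by rw [hL]; exact_mod_cast this
    linarith
  have hupR : 2 * (e2 G (Finset.univ \ P) : ℝ) ≤ 4 * a * (n - L) + (n - L) ^ 2 := by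
    rw [← hcardU]; exact_mod_cast hup
  have hcovR : (e2 G Finset.univ : ℝ) ≤ e2 G (Finset.univ \ P) +
      2 * ∑ v ∈ P, (dg G Finset.univ v : ℝ) := by exact_mod_cast hcov
  have hL0 : 0 ≤ L := by linarith
  have haL : 0 ≤ (a : ℝ) * L := by positivity
  -- set `c = n / p`
  set c : ℝ := (n : ℝ) / p with hcdef
  have hcp : c * p = n := by rw [hcdef]; field_simp
  have hsum2 : L * ((1 / 2 - 1 / (p : ℝ)) * (n : ℝ)) = L * n / 2 - L * c := by
    rw [hcdef]; ring
  rw [hsum2] at hsum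
  have main : 4 * (L * c) ≤ 8 * a * n + L ^ 2 + 1 := by nlinarith
  exact final_arith p k n ν L c a hpR hkR hnR hν16 hνs hcp hbigR main hL1 hL2 haR
end

section
/- Let k ≥ 2 be an integer, let p > 20k be an integer, let 0 < θ < 1/(20k), and let 0 < ε < min(θ²/6, 1/(100k²)). For all sufficiently large n (depending on k, p, θ, ε), if G is an n-vertex W_{2k+1}-free simple graph attaining the maximum spectral radius among all n-vertex W_{2k+1}-free graphs, V(G) = S ⊔ T is a maximum cut of G, P = { v ∈ V(G) : d(v) ≤ (1/2 − 1/p)n }, and M = { v ∈ S : d_S(v) ≥ θn } ∪ { v ∈ T : d_T(v) ≥ θn }, then |M| ≤ 3εn/θ and M \ P = ∅. -/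
open Classical in
lemma degIn_eq_sum {n : ℕ} (G : SimpleGraph (Fin n)) (A : Finset (Fin n)) (v : Fin n) :
    degIn G A v = ∑ u ∈ A, if G.Adj v u then 1 else 0 := by
  unfold degIn
  rw [Finset.card_filter]

lemma degIn_le_card {n : ℕ} (G : SimpleGraph (Fin n)) (A : Finset (Fin n)) (v : Fin n) :
    degIn G A v ≤ A.card := by
  classical
  unfold degIn
  exact Finset.card_filter_le _ _

lemma sum_degIn_comm {n : ℕ} (G : SimpleGraph (Fin n)) (A B : Finset (Fin n)) :
    ∑ a ∈ A, degIn G B a = ∑ b ∈ B, degIn G A b := by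
  classical
  simp only [degIn_eq_sum]
  rw [Finset.sum_comm]
  refine Finset.sum_congr rfl fun b _ => Finset.sum_congr rfl fun a _ => ?_
  simp only [G.adj_comm a b]

lemma cutCount_eq {n : ℕ} (G : SimpleGraph (Fin n)) (S : Finset (Fin n)) :
    cutCount G S = ∑ a ∈ S, degIn G Sᶜ a := by
  classical
  simp only [degIn_eq_sum]
  unfold cutCount
  rw [← Finset.sum_product', ← Finset.card_filter]
  congr 1
  ext ⟨a, b⟩
  simp only [Finset.mem_filter, Finset.mem_univ, true_and, Finset.mem_product, Finset.mem_compl]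
  tauto

lemma cutCount_compl {n : ℕ} (G : SimpleGraph (Fin n)) (S : Finset (Fin n)) :
    cutCount G Sᶜ = cutCount G S := by
  rw [cutCount_eq, cutCount_eq, compl_compl, sum_degIn_comm]

lemma maxcut_degIn {n : ℕ} (G : SimpleGraph (Fin n)) (S : Finset (Fin n))
    (h : ∀ S', cutCount G S' ≤ cutCount G S) (v : Fin n) (hv : v ∈ S) :
    degIn G S v ≤ degIn G Sᶜ v := by
  classical
  have h1 := h (S.erase v)
  rw [cutCount_eq, cutCount_eq, ← Finset.add_sum_erase S _ hv] at h1
  have h2 : ∀ a, degIn G (S.erase v)ᶜ a = (if G.Adj v a then 1 else 0) + degIn G Sᶜ a := by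
    intro a
    rw [degIn_eq_sum, degIn_eq_sum, Finset.compl_erase, Finset.sum_insert (by simpa using hv)]
    simp only [G.adj_comm]
  simp only [h2, Finset.sum_add_distrib] at h1
  have h3 : degIn G S v = ∑ a ∈ S.erase v, (if G.Adj v a then 1 else 0) := by
    rw [degIn_eq_sum, ← Finset.add_sum_erase S _ hv]
    simp
  omega

lemma contains_wheel {n k : ℕ} (hk : 2 ≤ k) (G : SimpleGraph (Fin n)) (v : Fin n)
    (a b : Fin k ↪ Fin n) (ha : ∀ i, G.Adj v (a i)) (hb : ∀ i, G.Adj v (b i))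
    (hab : ∀ i j, G.Adj (a i) (b j)) : ContainsCopy (wheelGraph (2 * k + 1)) G := by
  let f : Fin (2 * k + 1) → Fin n := fun i =>
    if h0 : i.val = 0 then v
    else if i.val % 2 = 1 then a ⟨(i.val - 1) / 2, by omega⟩ else b ⟨(i.val - 1) / 2, by omega⟩
  have f0 : ∀ i : Fin (2 * k + 1), i.val = 0 → f i = v := by
    intro i hi; exact dif_pos hi
  have f1 : ∀ i : Fin (2 * k + 1), i.val % 2 = 1 → f i = a ⟨(i.val - 1) / 2, by omega⟩ := by
    intro i hi
    have : i.val ≠ 0 := by omega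
    simp only [f, hi, this, dif_neg, if_true, not_false_eq_true]
  have f2 : ∀ i : Fin (2 * k + 1), (hz : i.val ≠ 0) → i.val % 2 = 0 →
      f i = b ⟨(i.val - 1) / 2, by omega⟩ := by
    intro i hz hi
    simp only [f, hi, hz, dif_neg, not_false_eq_true]
    simp
  have fadj : ∀ i j : Fin (2 * k + 1), i.val = 0 → j.val ≠ 0 → G.Adj (f i) (f j) := by
    intro i j hi hj
    rw [f0 i hi]
    rcases Nat.mod_two_eq_zero_or_one j.val with h | h
    · rw [f2 j hj h]; exact hb _
    · rw [f1 j h]; exact ha _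
  have fadj2 : ∀ i j : Fin (2 * k + 1), i.val % 2 = 1 → j.val ≠ 0 → j.val % 2 = 0 →
      G.Adj (f i) (f j) := by
    intro i j hi hj hj2
    rw [f1 i hi, f2 j hj hj2]; exact hab _ _
  have finj : Function.Injective f := by
    intro i j hij
    by_contra hne
    have hne' : i.val ≠ j.val := fun h => hne (Fin.ext h)
    by_cases hi : i.val = 0
    · exact (fadj i j hi (by omega)).ne hij
    by_cases hj : j.val = 0
    · exact (fadj j i hj (by omega)).ne hij.symm
    rcases Nat.mod_two_eq_zero_or_one i.val with h | h <;>
      rcases Nat.mod_two_eq_zero_or_one j.val with h' | h'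
    · rw [f2 i hi h, f2 j hj h'] at hij
      have := congrArg Fin.val (b.injective hij)
      simp only at this
      omega
    · exact (fadj2 j i h' hi h).ne hij.symm
    · exact (fadj2 i j h hj h').ne hij
    · rw [f1 i h, f1 j h'] at hij
      have := congrArg Fin.val (a.injective hij)
      simp only at this
      omega
  refine ⟨⟨f, finj⟩, ?_⟩
  intro i j hij
  obtain ⟨hne, h⟩ := hij
  have hne' : i.val ≠ j.val := fun h => hne (Fin.ext h)
  show G.Adj (f i) (f j)
  by_cases hi : i.val = 0
  · exact fadj i j hi (by omega)
  by_cases hj : j.val = 0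
  · exact (fadj j i hj (by omega)).symm
  have hij2 : i.val % 2 ≠ j.val % 2 := by omega
  rcases Nat.mod_two_eq_zero_or_one i.val with h1 | h1
  · exact (fadj2 j i (by omega) hi h1).symm
  · exact fadj2 i j h1 hj (by omega)

lemma kst (k : ℕ) (hk : 1 ≤ k) (δ : ℝ) (hδ : 0 < δ) :
    ∃ N : ℕ, ∀ n : ℕ, N ≤ n → ∀ (G : SimpleGraph (Fin n)) (X Y : Finset (Fin n)),
      δ * (n : ℝ) ^ 2 ≤ ((∑ y ∈ Y, degIn G X y : ℕ) : ℝ) →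
      ∃ a b : Fin k ↪ Fin n, (∀ i, a i ∈ X) ∧ (∀ i, b i ∈ Y) ∧ ∀ i j, G.Adj (a i) (b j) := by
  classical
  obtain ⟨N₁, hN₁⟩ := exists_nat_gt (2 * k / δ)
  obtain ⟨N₂, hN₂⟩ := exists_nat_gt (k / (δ / 2) ^ k)
  refine ⟨max 1 (max N₁ N₂), fun n hn G X Y hE => ?_⟩
  have hn0 : 1 ≤ n := le_trans (le_max_left _ _) hn
  have hn1 : 2 * k < δ * n := by
    have : (N₁ : ℝ) ≤ n := by exact_mod_cast (le_trans (le_trans (le_max_left _ _) (le_max_right _ _)) hn)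
    rw [div_lt_iff₀ hδ] at hN₁
    nlinarith
  have hn2 : k < (δ / 2) ^ k * n := by
    have : (N₂ : ℝ) ≤ n := by exact_mod_cast (le_trans (le_trans (le_max_right _ _) (le_max_right _ _)) hn)
    rw [div_lt_iff₀ (by positivity)] at hN₂
    have : 0 < (δ / 2) ^ k := by positivity
    nlinarith
  -- the common neighbourhood of a `k`-set
  by_contra hcon
  have hcommon : ∀ s ∈ X.powersetCard k, (Y.filter fun y => ∀ x ∈ s, G.Adj y x).card ≤ k := by
    intro s hs
    rw [Finset.mem_powersetCard] at hs
    by_contra hlt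
    push Not at hlt
    obtain ⟨t, ht, htc⟩ := Finset.exists_subset_card_eq hlt.le
    apply hcon
    refine ⟨(s.orderEmbOfFin hs.2).toEmbedding, (t.orderEmbOfFin htc).toEmbedding, ?_, ?_, ?_⟩
    · intro i; exact hs.1 (s.orderEmbOfFin_mem hs.2 i)
    · intro i; exact (Finset.mem_filter.1 (ht (t.orderEmbOfFin_mem htc i))).1
    · intro i j
      exact ((Finset.mem_filter.1 (ht (t.orderEmbOfFin_mem htc j))).2 _
        (s.orderEmbOfFin_mem hs.2 i)).symm
  have hdc : ∑ y ∈ Y, (degIn G X y).choose k ≤ n.choose k * k := by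
    have h1 : ∀ y ∈ Y, (degIn G X y).choose k =
        (Finset.bipartiteAbove (fun y s => ∀ x ∈ s, G.Adj y x) (X.powersetCard k) y).card := by
      intro y _
      unfold degIn
      rw [← Finset.card_powersetCard]
      congr 1
      ext s
      simp only [Finset.mem_powersetCard, Finset.bipartiteAbove, Finset.mem_filter,
        Finset.subset_iff]
      constructor
      · rintro ⟨h, h'⟩
        exact ⟨⟨fun x hx => (h hx).1, h'⟩, fun x hx => (h hx).2⟩
      · rintro ⟨⟨h, h'⟩, h2⟩
        exact ⟨fun x hx => ⟨h hx, h2 x hx⟩, h'⟩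
    rw [Finset.sum_congr rfl h1, Finset.sum_card_bipartiteAbove_eq_sum_card_bipartiteBelow]
    calc _ ≤ ∑ s ∈ X.powersetCard k, k := Finset.sum_le_sum hcommon
      _ = X.card.choose k * k := by simp
      _ ≤ _ := by
        gcongr
        simpa using X.card_le_univ
  have hdesc : ∑ y ∈ Y, (degIn G X y + 1 - k) ^ k ≤ n ^ k * k := by
    calc ∑ y ∈ Y, (degIn G X y + 1 - k) ^ k ≤ ∑ y ∈ Y, (degIn G X y).descFactorial k :=
          Finset.sum_le_sum fun y _ => Nat.pow_sub_le_descFactorial _ _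
      _ = k.factorial * ∑ y ∈ Y, (degIn G X y).choose k := by
          rw [Finset.mul_sum]
          exact Finset.sum_congr rfl fun y _ => Nat.descFactorial_eq_factorial_mul_choose _ _
      _ ≤ k.factorial * (n.choose k * k) := by gcongr
      _ = n.descFactorial k * k := by rw [Nat.descFactorial_eq_factorial_mul_choose]; ring
      _ ≤ n ^ k * k := by gcongr; exact Nat.descFactorial_le_pow _ _
  have hYn : Y.card ≤ n := by simpa using Y.card_le_univ
  have hsum : ∑ y ∈ Y, degIn G X y ≤ ∑ y ∈ Y, (degIn G X y + 1 - k) + n * k := by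
    calc ∑ y ∈ Y, degIn G X y ≤ ∑ y ∈ Y, ((degIn G X y + 1 - k) + k) :=
          Finset.sum_le_sum fun y _ => by omega
      _ = ∑ y ∈ Y, (degIn G X y + 1 - k) + Y.card * k := by
          rw [Finset.sum_add_distrib]; simp
      _ ≤ _ := by gcongr
  obtain ⟨m, rfl⟩ : ∃ m, k = m + 1 := ⟨k - 1, by omega⟩
  set k := m + 1 with hkdef
  set Q := ∑ y ∈ Y, (degIn G X y + 1 - k) with hQ
  have hpow : Q ^ k ≤ n ^ m * (n ^ k * k) := by
    calc Q ^ k ≤ Y.card ^ m * ∑ y ∈ Y, (degIn G X y + 1 - k) ^ k :=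
          pow_sum_le_card_mul_sum_pow (fun _ _ => Nat.zero_le _) m
      _ ≤ _ := by gcongr
  have hQl : δ / 2 * (n : ℝ) ^ 2 ≤ Q := by
    have : ((∑ y ∈ Y, degIn G X y : ℕ) : ℝ) ≤ Q + n * k := by exact_mod_cast hsum
    have hnn : (1 : ℝ) ≤ n := by exact_mod_cast hn0
    nlinarith
  have hpow' : (Q : ℝ) ^ k ≤ (n : ℝ) ^ m * ((n : ℝ) ^ k * k) := by exact_mod_cast hpow
  have h5 : (δ / 2 * (n : ℝ) ^ 2) ^ k ≤ (Q : ℝ) ^ k := by gcongr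
  have hnpos : (0 : ℝ) < n := by exact_mod_cast hn0
  have h6 : (δ / 2 * (n : ℝ) ^ 2) ^ k = (n : ℝ) ^ m * ((n : ℝ) ^ k * ((δ / 2) ^ k * n)) := by
    rw [hkdef]; ring
  rw [h6] at h5
  have h7 := h5.trans hpow'
  rw [mul_le_mul_iff_right₀ (by positivity), mul_le_mul_iff_right₀ (by positivity)] at h7
  linarith

lemma lam1_set_finite {n : ℕ} (A : Matrix (Fin n) (Fin n) ℝ) :
    {μ : ℝ | Module.End.HasEigenvalue (Matrix.toLin' A) μ}.Finite :=
  Module.End.finite_hasEigenvalue _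

lemma lam1_upper_s6 {n : ℕ} (G : SimpleGraph (Fin n)) (h : 0 < lam1 G) :
    ∃ u : Fin n, ∃ A : Finset (Fin n), (∀ v ∈ A, G.Adj u v) ∧
      lam1 G ^ 2 ≤ ((∑ v ∈ A, degIn G Finset.univ v : ℕ) : ℝ) := by
  classical
  have hmem : Module.End.HasEigenvalue (Matrix.toLin' (G.adjMatrix ℝ)) (lam1 G) := by
    have hne : {μ : ℝ | Module.End.HasEigenvalue (Matrix.toLin' (G.adjMatrix ℝ)) μ}.Nonempty := by
      by_contra hemp
      rw [Set.not_nonempty_iff_eq_empty] at hemp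
      have : lam1 G = 0 := by
        unfold lam1
        convert Real.sSup_empty
      linarith
    have := hne.csSup_mem (lam1_set_finite (G.adjMatrix ℝ))
    unfold lam1
    convert this
  obtain ⟨x, hx⟩ := hmem.exists_hasEigenvector
  have hx1 : ∀ v, ∑ w ∈ G.neighborFinset v, x w = lam1 G * x v := by
    intro v
    have := congrFun hx.apply_eq_smul v
    simpa [SimpleGraph.adjMatrix_mulVec_apply] using this
  obtain ⟨w, hw⟩ := Function.ne_iff.1 hx.2
  have : Nonempty (Fin n) := ⟨w⟩
  obtain ⟨u, hu⟩ := Finite.exists_max (fun v => |x v|)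
  have hupos : 0 < |x u| := lt_of_lt_of_le (abs_pos.2 hw) (hu w)
  refine ⟨u, G.neighborFinset u, fun v hv => by simpa using hv, ?_⟩
  have h1 : lam1 G ^ 2 * x u = ∑ v ∈ G.neighborFinset u, ∑ w ∈ G.neighborFinset v, x w := by
    simp only [hx1]
    rw [← Finset.mul_sum, hx1]; ring
  have h2 : lam1 G ^ 2 * |x u| ≤
      ((∑ v ∈ G.neighborFinset u, degIn G Finset.univ v : ℕ) : ℝ) * |x u| := by
    calc lam1 G ^ 2 * |x u| = |lam1 G ^ 2 * x u| := by
          rw [abs_mul, abs_of_nonneg (sq_nonneg (lam1 G))]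
      _ ≤ ∑ v ∈ G.neighborFinset u, |∑ w ∈ G.neighborFinset v, x w| := by
          rw [h1]; exact Finset.abs_sum_le_sum_abs _ _
      _ ≤ ∑ v ∈ G.neighborFinset u, (degIn G Finset.univ v : ℝ) * |x u| := by
          apply Finset.sum_le_sum
          intro v _
          calc |∑ w ∈ G.neighborFinset v, x w| ≤ ∑ w ∈ G.neighborFinset v, |x w| :=
                Finset.abs_sum_le_sum_abs _ _
            _ ≤ ∑ w ∈ G.neighborFinset v, |x u| := Finset.sum_le_sum fun w _ => hu w
            _ = (degIn G Finset.univ v : ℝ) * |x u| := by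
                rw [Finset.sum_const, nsmul_eq_mul]
                congr 2
                unfold degIn
                congr 1
                ext w
                simp
      _ = _ := by rw [← Finset.sum_mul]; push_cast; rfl
  exact le_of_mul_le_mul_right h2 hupos

/-- complete bipartite graph with parts `{i < a}` and `{i ≥ a}` -/
def bip (n a : ℕ) : SimpleGraph (Fin n) where
  Adj i j := (i.val < a ∧ ¬ j.val < a) ∨ (j.val < a ∧ ¬ i.val < a)
  symm := by
    constructor
    intro i j h
    tauto
  loopless := by
    constructor
    intro i h
    tauto

lemma bip_wheelFree {n a k : ℕ} (hk : 2 ≤ k) : WheelFree (2 * k + 1) (bip n a) := by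
  rintro ⟨f, hf⟩
  have h01 := hf ⟨0, by omega⟩ ⟨1, by omega⟩ (by simp [wheelGraph])
  have h02 := hf ⟨0, by omega⟩ ⟨2, by omega⟩ (by simp [wheelGraph])
  have h12 := hf ⟨1, by omega⟩ ⟨2, by omega⟩ (by simp [wheelGraph])
  simp only [bip] at h01 h02 h12
  omega

lemma bip_lam1 {n a : ℕ} (ha' : a < n) (ha1 : 1 ≤ a) :
    Real.sqrt (a * (n - a : ℕ)) ≤ lam1 (bip n a) := by
  classical
  have ha : a ≤ n := ha'.le
  have key : Module.End.HasEigenvalue (Matrix.toLin' ((bip n a).adjMatrix ℝ))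
      (Real.sqrt (a * (n - a : ℕ))) := by
    let x : Fin n → ℝ := fun i => if i.val < a then Real.sqrt (n - a : ℕ) else Real.sqrt a
    have hc1 : ((Finset.univ.filter fun j : Fin n => j.val < a).card : ℝ) = a := by
      rw [Fin.card_filter_val_lt]; simp [ha]
    have hc2 : ((Finset.univ.filter fun j : Fin n => ¬ j.val < a).card : ℝ) = (n - a : ℕ) := by
      have h := Finset.card_filter_add_card_filter_not (s := (Finset.univ : Finset (Fin n)))
        (fun j : Fin n => j.val < a)
      have h' : (Finset.univ.filter fun j : Fin n => j.val < a).card = a := by exact_mod_cast hc1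
      rw [h', Finset.card_univ, Fintype.card_fin] at h
      congr 1
      omega
    have hsq1 : Real.sqrt a * Real.sqrt a = a := Real.mul_self_sqrt (by positivity)
    have hsq2 : Real.sqrt (n - a : ℕ) * Real.sqrt (n - a : ℕ) = (n - a : ℕ) :=
      Real.mul_self_sqrt (by positivity)
    apply Module.End.hasEigenvalue_of_hasEigenvector (x := x)
    refine Module.End.hasEigenvector_iff.2 ⟨Module.End.mem_eigenspace_iff.2 ?_, ?_⟩
    · funext i
      rw [Real.sqrt_mul (by positivity)]
      simp only [Matrix.toLin'_apply, SimpleGraph.adjMatrix_mulVec_apply, Pi.smul_apply,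
        smul_eq_mul]
      by_cases hi : i.val < a
      · have hN : (bip n a).neighborFinset i = Finset.univ.filter fun j : Fin n => ¬ j.val < a := by
          ext j
          rw [SimpleGraph.mem_neighborFinset]
          simp [bip, hi]
        rw [hN, Finset.sum_congr rfl (g := fun _ => Real.sqrt a), Finset.sum_const, nsmul_eq_mul,
          hc2]
        · simp only [x, hi, if_true]
          linear_combination (-Real.sqrt a) * hsq2
        · intro j hj
          have : ¬ j.val < a := (Finset.mem_filter.1 hj).2
          simp only [x, this, if_false]
      · have hN : (bip n a).neighborFinset i = Finset.univ.filter fun j : Fin n => j.val < a := by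
          ext j
          rw [SimpleGraph.mem_neighborFinset]
          simp only [bip, hi, Finset.mem_filter, Finset.mem_univ, true_and, false_and, false_or,
            not_false_eq_true, and_true]
        rw [hN, Finset.sum_congr rfl (g := fun _ => Real.sqrt (n - a : ℕ)), Finset.sum_const,
          nsmul_eq_mul, hc1]
        · simp only [x, hi, if_false]
          linear_combination (-Real.sqrt (n - a : ℕ)) * hsq1
        · intro j hj
          have : j.val < a := (Finset.mem_filter.1 hj).2
          simp only [x, this, if_true]
    · intro h0
      have h1 := congrFun h0 ⟨n - 1, by omega⟩
      have : ¬ (n - 1 < a) := by omega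
      simp only [x, this, if_false, Pi.zero_apply] at h1
      have : 0 < Real.sqrt a := Real.sqrt_pos.2 (by exact_mod_cast ha1)
      linarith
  unfold lam1
  apply le_csSup
  · exact (lam1_set_finite _).bddAbove
  · convert key

lemma dense_sub {n : ℕ} (G : SimpleGraph (Fin n)) (U X Y : Finset (Fin n))
    (hX : X ⊆ U) (hY : Y ⊆ Uᶜ) :
    cutCount G U + X.card * Y.card ≤ ∑ a ∈ X, degIn G Y a + U.card * Uᶜ.card := by
  classical
  have h1 : ∀ a, degIn G Uᶜ a + Y.card ≤ degIn G Y a + Uᶜ.card := by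
    intro a
    have e1 : degIn G Uᶜ a = degIn G (Uᶜ \ Y) a + degIn G Y a := by
      rw [degIn_eq_sum, degIn_eq_sum, degIn_eq_sum, Finset.sum_sdiff hY]
    have e2 := degIn_le_card G (Uᶜ \ Y) a
    have e3 := Finset.card_sdiff_add_card_eq_card hY
    omega
  have h2 : ∑ a ∈ X, degIn G Uᶜ a + X.card * Y.card ≤
      ∑ a ∈ X, degIn G Y a + X.card * Uᶜ.card := by
    have := Finset.sum_le_sum (s := X) fun a _ => h1 a
    simpa [Finset.sum_add_distrib] using this
  have h3 : ∑ a ∈ U \ X, degIn G Uᶜ a ≤ (U \ X).card * Uᶜ.card := by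
    have := Finset.sum_le_sum (s := U \ X) fun a _ => degIn_le_card G Uᶜ a
    simpa using this
  have h4 := Finset.sum_sdiff (f := fun a => degIn G Uᶜ a) hX
  have h5 := Finset.card_sdiff_add_card_eq_card hX
  rw [cutCount_eq, ← h4, ← h5, add_mul]
  omega

lemma core (k : ℕ) (hk : 2 ≤ k) (θ : ℝ) (hθ0 : 0 < θ) :
    ∃ N : ℕ, ∀ n : ℕ, N ≤ n → ∀ G : SimpleGraph (Fin n), IsSpexWheel (2 * k + 1) G →
      ∀ U : Finset (Fin n), (∀ S', cutCount G S' ≤ cutCount G U) → ∀ v ∈ U,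
        (degIn G U v : ℝ) < θ * n := by
  classical
  obtain ⟨N₁, hN₁⟩ := kst k (by omega) (θ ^ 2 / 4) (by positivity)
  obtain ⟨N₂, hN₂⟩ := exists_nat_gt (1 / θ ^ 2)
  refine ⟨max 2 (max N₁ N₂), fun n hn G hG U hU v hv => ?_⟩
  have hn0 : 2 ≤ n := le_trans (le_max_left _ _) hn
  have hn1 : N₁ ≤ n := le_trans (le_trans (le_max_left _ _) (le_max_right _ _)) hn
  have hn2 : N₂ ≤ n := le_trans (le_trans (le_max_right _ _) (le_max_right _ _)) hn
  have hnr : (2 : ℝ) ≤ n := by exact_mod_cast hn0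
  have hθn : 1 < θ ^ 2 * n := by
    have h1 : (N₂ : ℝ) ≤ n := by exact_mod_cast hn2
    rw [div_lt_iff₀ (by positivity)] at hN₂
    have : 0 < θ ^ 2 := by positivity
    nlinarith
  have hθn2 : 2 < θ ^ 2 * (n : ℝ) ^ 2 := by nlinarith
  -- no dense pair inside a neighbourhood
  have hfree : ∀ (w : Fin n) (X Y : Finset (Fin n)), (∀ x ∈ X, G.Adj w x) →
      (∀ y ∈ Y, G.Adj w y) →
      ((∑ y ∈ Y, degIn G X y : ℕ) : ℝ) < θ ^ 2 / 4 * (n : ℝ) ^ 2 := by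
    intro w X Y hX hY
    by_contra hcon
    push Not at hcon
    obtain ⟨a, b, ha, hb, hab⟩ := hN₁ n hn1 G X Y hcon
    exact hG.1 (contains_wheel hk G w a b (fun i => hX _ (ha i)) (fun i => hY _ (hb i)) hab)
  -- spectral lower bound
  have hlam : Real.sqrt ((n / 2 : ℕ) * (n - n / 2 : ℕ)) ≤ lam1 G :=
    (bip_lam1 (by omega) (by omega)).trans (hG.2 _ (bip_wheelFree hk))
  have hprod : ((n : ℝ) ^ 2 - 1) / 4 ≤ ((n / 2 : ℕ) : ℝ) * ((n - n / 2 : ℕ) : ℝ) := by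
    rcases Nat.even_or_odd' n with ⟨m, rfl | rfl⟩
    · have e1 : 2 * m / 2 = m := by omega
      have e2 : 2 * m - m = m := by omega
      rw [e1, e2]; push_cast; nlinarith
    · have e1 : (2 * m + 1) / 2 = m := by omega
      have e2 : 2 * m + 1 - m = m + 1 := by omega
      rw [e1, e2]; push_cast; nlinarith
  have hlampos : 0 < lam1 G := by
    refine lt_of_lt_of_le (Real.sqrt_pos.2 ?_) hlam
    nlinarith
  have hlam2 : ((n : ℝ) ^ 2 - 1) / 4 ≤ lam1 G ^ 2 :=
    hprod.trans (Real.sqrt_le_left hlampos.le |>.1 hlam)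
  obtain ⟨u, A, hA, hAl⟩ := lam1_upper_s6 G hlampos
  have hsplit : ∑ w ∈ A, degIn G Finset.univ w = ∑ w ∈ A, degIn G A w + cutCount G A := by
    rw [cutCount_eq, ← Finset.sum_add_distrib]
    refine Finset.sum_congr rfl fun w _ => ?_
    rw [degIn_eq_sum, degIn_eq_sum, degIn_eq_sum, Finset.sum_add_sum_compl]
  have hAA := hfree u A A hA hA
  have hcut : (cutCount G A : ℝ) ≤ cutCount G U := by exact_mod_cast hU A
  rw [hsplit] at hAl
  push_cast at hAl hAA
  by_contra hcon
  push Not at hcon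
  have hcon2 : θ * n ≤ (degIn G Uᶜ v : ℝ) :=
    hcon.trans (by exact_mod_cast maxcut_degIn G U hU v hv)
  have hXY := hfree v (Uᶜ.filter fun y => G.Adj v y) (U.filter fun x => G.Adj v x)
    (fun x hx => (Finset.mem_filter.1 hx).2) (fun x hx => (Finset.mem_filter.1 hx).2)
  have hd := dense_sub G U (U.filter fun x => G.Adj v x) (Uᶜ.filter fun y => G.Adj v y)
    (Finset.filter_subset _ _) (Finset.filter_subset _ _)
  have hc1 : (U.filter fun x => G.Adj v x).card = degIn G U v := by
    unfold degIn; congr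
  have hc2 : (Uᶜ.filter fun x => G.Adj v x).card = degIn G Uᶜ v := by
    unfold degIn; congr
  rw [hc1, hc2] at hd
  have hd' : (cutCount G U : ℝ) + degIn G U v * degIn G Uᶜ v ≤
      ((∑ a ∈ U.filter fun x => G.Adj v x, degIn G (Uᶜ.filter fun y => G.Adj v y) a : ℕ) : ℝ)
        + U.card * Uᶜ.card := by exact_mod_cast hd
  have hUU : (U.card : ℝ) + Uᶜ.card = n := by
    have := Finset.card_add_card_compl U
    rw [Fintype.card_fin] at this
    exact_mod_cast this
  have hamgm : (U.card : ℝ) * Uᶜ.card ≤ (n : ℝ) ^ 2 / 4 := by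
    rw [← hUU]; nlinarith [sq_nonneg ((U.card : ℝ) - Uᶜ.card)]
  have hmul : (θ * n) * (θ * n) ≤ (degIn G U v : ℝ) * degIn G Uᶜ v := by
    gcongr
  nlinarith


/-- The set `M` of vertices with large internal degree satisfies
`|M| ≤ 3εn/θ` and `M \ P = ∅`. -/
theorem M_small_and_in_P (k p : ℕ) (θ ε : ℝ) (hk : 2 ≤ k) (hp : 20 * k < p)
    (hθ0 : 0 < θ) (hθ : θ < 1 / (20 * (k : ℝ))) (hε0 : 0 < ε)
    (hε : ε < min (θ ^ 2 / 6) (1 / (100 * (k : ℝ) ^ 2))) :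
    ∃ N : ℕ, ∀ n : ℕ, N ≤ n → ∀ G : SimpleGraph (Fin n), IsSpexWheel (2 * k + 1) G →
      ∀ S T : Finset (Fin n), IsMaxCut G S T →
      ∀ P M : Set (Fin n),
        P = {v : Fin n | (deg G v : ℝ) ≤ (1 / 2 - 1 / (p : ℝ)) * (n : ℝ)} →
        M = {v : Fin n | (v ∈ S ∧ θ * (n : ℝ) ≤ (degIn G S v : ℝ)) ∨
              (v ∈ T ∧ θ * (n : ℝ) ≤ (degIn G T v : ℝ))} →
        (M.ncard : ℝ) ≤ 3 * ε * (n : ℝ) / θ ∧ M \ P = ∅ := by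
  obtain ⟨N, hN⟩ := core k hk θ hθ0
  refine ⟨N, fun n hn G hG S T hST P M _ hM => ?_⟩
  obtain ⟨rfl, hS⟩ := hST
  have hemp : M = ∅ := by
    rw [hM, Set.eq_empty_iff_forall_notMem]
    rintro v (⟨hv, h⟩ | ⟨hv, h⟩)
    · exact absurd h (not_le.2 (hN n hn G hG S hS v hv))
    · exact absurd h (not_le.2 (hN n hn G hG Sᶜ
        (fun S' => by rw [cutCount_compl]; exact hS S') v hv))
  rw [hemp]
  refine ⟨?_, Set.empty_sdiff P⟩
  rw [Set.ncard_empty]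
  push_cast
  positivity
end
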